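/- arXiv:2412.16004 — 2 statements merged into one kernel-verified Lean document; each statement's English description precedes it below -/
import Mathlib

section
/- Let n ≥ 2 and R a commutative ring with invertible element q^{1/n}, q := (q^{1/n})^n. In the common underlying R-module of O_q(M_n) and B_q(M_n), for every integer N ≥ 1 and all 1 ≤ k, l ≤ n: (x^k_k)^N x^k_l = ((x^k_k)^N) ⬝ x^k_l + (1 − q^{−2N}) Σ_{β=1}^{k−1} ((x^k_k)^{N−1} x^k_β) ⬝ x^β_l, where powers and juxtaposed products are taken with the original product of O_q(M_n) and ⬝ is the covariantized product. -/
open scoped TensorProduct BigOperators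

noncomputable section

universe u

/-- Integer power `q^m` of an invertible element `qq` of `R`, as an element of `R`. -/
def qzpow {R : Type u} [CommRing R] (qq : Rˣ) (m : ℤ) : R := ((qq ^ m : Rˣ) : R)

/-- The defining relations of the `q`-matrix bialgebra `O_q(M_n)` for a family
`y i j` (the image of the generator `x^i_j`; the first index is the upper one). -/
def OqMnRels {R : Type u} [CommRing R] {B : Type u} [Ring B] [Algebra R B]
    (n : ℕ) (qq : Rˣ) (y : Fin n → Fin n → B) : Prop :=
  (∀ i j k : Fin n, j < k → y i k * y i j = (qq : R) • (y i j * y i k)) ∧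
  (∀ i j k : Fin n, j < k → y k i * y j i = (qq : R) • (y j i * y k i)) ∧
  (∀ i j k l : Fin n, i < j → k < l → y i l * y j k = y j k * y i l) ∧
  (∀ i j k l : Fin n, i < j → k < l →
    y j l * y i k - y i k * y j l = ((qq : R) - ((qq⁻¹ : Rˣ) : R)) • (y i l * y j k))

/-- `ρ` is a dual quasitriangular structure on the bialgebra `A`.  All conditions
involving the Sweedler components of the comultiplication are expressed by
quantifying over finite representations of `comul`. -/
def IsDQT {R : Type u} [CommRing R] {A : Type u} [Ring A] [Bialgebra R A]
    (ρ : A →ₗ[R] A →ₗ[R] R) : Prop :=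
  (∀ (a b c : A) (s : Finset ℕ) (c1 c2 : ℕ → A),
      Coalgebra.comul (R := R) c = ∑ i ∈ s, c1 i ⊗ₜ[R] c2 i →
      ρ (a * b) c = ∑ i ∈ s, ρ a (c1 i) * ρ b (c2 i)) ∧
  (∀ (a b c : A) (s : Finset ℕ) (a1 a2 : ℕ → A),
      Coalgebra.comul (R := R) a = ∑ i ∈ s, a1 i ⊗ₜ[R] a2 i →
      ρ a (b * c) = ∑ i ∈ s, ρ (a1 i) c * ρ (a2 i) b) ∧
  (∀ a : A, ρ a 1 = Coalgebra.counit (R := R) a) ∧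
  (∀ a : A, ρ 1 a = Coalgebra.counit (R := R) a) ∧
  (∀ (a b : A) (s t : Finset ℕ) (a1 a2 b1 b2 : ℕ → A),
      Coalgebra.comul (R := R) a = ∑ i ∈ s, a1 i ⊗ₜ[R] a2 i →
      Coalgebra.comul (R := R) b = ∑ j ∈ t, b1 j ⊗ₜ[R] b2 j →
      ∑ i ∈ s, ∑ j ∈ t, ρ (a2 i) (b2 j) • (b1 j * a1 i) =
        ∑ i ∈ s, ∑ j ∈ t, ρ (a1 i) (b1 j) • (a2 i * b2 j))

/-- `ρt` is the convolution inverse of `ρ` in `Hom(A ⊗ A^cop, R)`. -/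
def IsCopConvInv {R : Type u} [CommRing R] {A : Type u} [Ring A] [Bialgebra R A]
    (ρ ρt : A →ₗ[R] A →ₗ[R] R) : Prop :=
  ∀ (a b : A) (s t : Finset ℕ) (a1 a2 b1 b2 : ℕ → A),
    Coalgebra.comul (R := R) a = ∑ i ∈ s, a1 i ⊗ₜ[R] a2 i →
    Coalgebra.comul (R := R) b = ∑ j ∈ t, b1 j ⊗ₜ[R] b2 j →
    (∑ i ∈ s, ∑ j ∈ t, ρt (a1 i) (b2 j) * ρ (a2 i) (b1 j)
        = Coalgebra.counit (R := R) a * Coalgebra.counit (R := R) b) ∧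
    (∑ i ∈ s, ∑ j ∈ t, ρ (a1 i) (b2 j) * ρt (a2 i) (b1 j)
        = Coalgebra.counit (R := R) a * Coalgebra.counit (R := R) b)

/-- The twofold comultiplication `a ↦ a₍₁₎ ⊗ (a₍₂₎ ⊗ a₍₃₎)`. -/
def comul2 {R : Type u} [CommRing R] {A : Type u} [Ring A] [Bialgebra R A] :
    A →ₗ[R] A ⊗[R] (A ⊗[R] A) :=
  (TensorProduct.map LinearMap.id (Coalgebra.comul (R := R))).comp (Coalgebra.comul (R := R))

/-- `cmul` is the covariantized (reflection equation) product
`a ⬝ b = a₍₂₎ b₍₃₎ 𝓡̃(a₍₃₎, b₍₁₎) 𝓡(a₍₁₎, b₍₂₎)` built from `ρ` and its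
convolution inverse `ρt` in `Hom(A ⊗ A^cop, R)`, expressed via finite
representations of the iterated comultiplication. -/
def CovChar {R : Type u} [CommRing R] {A : Type u} [Ring A] [Bialgebra R A]
    (ρ ρt : A →ₗ[R] A →ₗ[R] R) (cmul : A → A → A) : Prop :=
  ∀ (a b : A) (s t : Finset ℕ) (a1 a2 a3 b1 b2 b3 : ℕ → A),
    comul2 (R := R) a = ∑ i ∈ s, a1 i ⊗ₜ[R] (a2 i ⊗ₜ[R] a3 i) →
    comul2 (R := R) b = ∑ j ∈ t, b1 j ⊗ₜ[R] (b2 j ⊗ₜ[R] b3 j) →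
    cmul a b = ∑ i ∈ s, ∑ j ∈ t, (ρt (a3 i) (b1 j) * ρ (a1 i) (b2 j)) • (a2 i * b3 j)

/-- The value `𝓡(x^i_j, x^k_l)` of the standard dual quasitriangular structure of
`O_q(M_n)`, where `qr = q^{1/n}` is the chosen `n`-th root of `q = qr^n`:
`𝓡(x^i_j, x^k_l) = q^{−1/n} (δ^i_j δ^k_l q^{δ^j_l} + (q − q^{−1}) δ_{j>l} δ^i_l δ^k_j)`. -/
def RmatVal {R : Type u} [CommRing R] (n : ℕ) (qr : Rˣ) (i j k l : Fin n) : R :=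
  ((qr⁻¹ : Rˣ) : R) *
    ((if i = j then 1 else 0) * (if k = l then 1 else 0) *
        (if j = l then ((qr ^ n : Rˣ) : R) else 1)
      + (((qr ^ n : Rˣ) : R) - (((qr ^ n)⁻¹ : Rˣ) : R)) * (if l < j then 1 else 0) *
          (if i = l then 1 else 0) * (if k = j then 1 else 0))

/-- Product of a nonempty list under a binary operation, bracketed to the right. -/
def cchain {A : Type u} (cmul : A → A → A) : A → List A → A
  | a, [] => a
  | a, b :: l => cmul a (cchain cmul b l)

/-- Product of a list under the binary operation `cmul`, equal to `one` on the empty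
list (and not otherwise using `one`). -/
def cListProd {A : Type u} (cmul : A → A → A) (one : A) : List A → A
  | [] => one
  | a :: l => cchain cmul a l

/-- `N`-th power with respect to the binary operation `cmul`. -/
def cpow {A : Type u} (cmul : A → A → A) (one : A) (a : A) (N : ℕ) : A :=
  cListProd cmul one (List.replicate N a)

/-!
Write `f ⇀ a = f(a₍₂₎) a₍₁₎` and `a ↼ f = f(a₍₁₎) a₍₂₎`. In terms of these two actions,
`a ⬝ x^r_l = ∑_{p,m} (𝓡̃(-, x^r_p) ⇀ (a ↼ 𝓡(-, x^p_m))) x^m_l`. Since the actions commute and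
`𝓡̃` inverts `𝓡`, the values of `𝓡̃` are never needed:
`∑_r (𝓡(-, x^p_r) ⇀ a) ⬝ x^r_l = ∑_m (a ↼ 𝓡(-, x^p_m)) x^m_l`.
Let `c` be the normalization of `𝓡`, and take `p = k` and `a = (x^k_k)^N`. On the right only
`m = k` survives, with coefficient `c^N q^N`. On the left the index `r = k` contributes
`c^N q^N (x^k_k)^N ⬝ x^k_l`, each `r < k` contributes
`c^N (q^N − q^{−N}) ((x^k_k)^{N−1} x^k_r) ⬝ x^r_l`, and `r > k` contributes nothing. Cancelling
`c^N q^N` gives the recursion.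
-/

section Coregular

variable {R A : Type*} [CommSemiring R] [AddCommMonoid A] [Module R A] [Coalgebra R A]

/-- The left coregular action `f ⇀ a = f(a₍₂₎) a₍₁₎` of the dual of a coalgebra. -/
def leftCoregular : (A →ₗ[R] R) →ₗ[R] A →ₗ[R] A :=
  LinearMap.mk₂ R (fun f a => TensorProduct.rid R A (f.lTensor A (Coalgebra.comul a)))
    (by simp [LinearMap.lTensor_add]) (by simp [LinearMap.lTensor_smul]) (by simp) (by simp)

/-- The right coregular action `a ↼ f = f(a₍₁₎) a₍₂₎` of the dual of a coalgebra. -/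
def rightCoregular : (A →ₗ[R] R) →ₗ[R] A →ₗ[R] A :=
  LinearMap.mk₂ R (fun f a => TensorProduct.lid R A (f.rTensor A (Coalgebra.comul a)))
    (by simp [LinearMap.rTensor_add]) (by simp [LinearMap.rTensor_smul]) (by simp) (by simp)

lemma leftCoregular_apply_of_comul_eq {κ : Type*} {s : Finset κ} {a : A} {a1 a2 : κ → A}
    (ha : Coalgebra.comul (R := R) a = ∑ i ∈ s, a1 i ⊗ₜ[R] a2 i) (f : A →ₗ[R] R) :
    leftCoregular f a = ∑ i ∈ s, f (a2 i) • a1 i := by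
  simp [leftCoregular, ha]

lemma rightCoregular_apply_of_comul_eq {κ : Type*} {s : Finset κ} {a : A} {a1 a2 : κ → A}
    (ha : Coalgebra.comul (R := R) a = ∑ i ∈ s, a1 i ⊗ₜ[R] a2 i) (f : A →ₗ[R] R) :
    rightCoregular f a = ∑ i ∈ s, f (a1 i) • a2 i := by
  simp [rightCoregular, ha]

lemma leftCoregular_counit (a : A) : leftCoregular (Coalgebra.counit (R := R)) a = a := by
  simp [leftCoregular]

lemma leftCoregular_leftCoregular (f g : A →ₗ[R] R) (a : A) :
    leftCoregular f (leftCoregular g a) =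
      leftCoregular (WithConv.toConv f * WithConv.toConv g).ofConv a := by
  have h (t : A ⊗[R] A) :
      leftCoregular f (TensorProduct.rid R A (g.lTensor A t)) =
        TensorProduct.rid R A ((LinearMap.mul' R R ∘ₗ TensorProduct.map f g).lTensor A
          (TensorProduct.assoc R A A A (Coalgebra.comul.rTensor A t))) := by
    induction t with
    | zero => simp
    | add t u ht hu => simp only [map_add, ht, hu]
    | tmul b c =>
      obtain ⟨n, b1, b2, hb⟩ := TensorProduct.exists_sum_tmul_eq (Coalgebra.comul (R := R) b)
      simp [leftCoregular, hb, TensorProduct.sum_tmul, Finset.smul_sum, smul_smul, mul_comm]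
  simpa [LinearMap.convMul_def, leftCoregular, LinearMap.lTensor_comp_apply] using
    h (Coalgebra.comul a)

lemma leftCoregular_rightCoregular_eq_lid_map (f g : A →ₗ[R] R) (a : A) :
    leftCoregular f (rightCoregular g a) =
      TensorProduct.lid R A (TensorProduct.map g (TensorProduct.rid R A ∘ₗ f.lTensor A)
        (Coalgebra.comul.lTensor A (Coalgebra.comul a))) := by
  have h (t : A ⊗[R] A) :
      leftCoregular f (TensorProduct.lid R A (g.rTensor A t)) =
        TensorProduct.lid R A (TensorProduct.map g (TensorProduct.rid R A ∘ₗ f.lTensor A)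
          (Coalgebra.comul.lTensor A t)) := by
    induction t with
    | zero => simp
    | add t u ht hu => simp only [map_add, ht, hu]
    | tmul b c => simp [leftCoregular]
  exact h (Coalgebra.comul a)

lemma leftCoregular_rightCoregular (f g : A →ₗ[R] R) (a : A) :
    leftCoregular f (rightCoregular g a) = rightCoregular g (leftCoregular f a) := by
  have h (t : A ⊗[R] A) :
      rightCoregular g (TensorProduct.rid R A (f.lTensor A t)) =
        TensorProduct.lid R A (TensorProduct.map g (TensorProduct.rid R A ∘ₗ f.lTensor A)
          (TensorProduct.assoc R A A A (Coalgebra.comul.rTensor A t))) := by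
    induction t with
    | zero => simp
    | add t u ht hu => simp only [map_add, ht, hu]
    | tmul b c =>
      obtain ⟨n, b1, b2, hb⟩ := TensorProduct.exists_sum_tmul_eq (Coalgebra.comul (R := R) b)
      simp [rightCoregular, hb, TensorProduct.sum_tmul, Finset.smul_sum, smul_smul]
  rw [leftCoregular_rightCoregular_eq_lid_map, ← Coalgebra.coassoc_apply]
  exact (h (Coalgebra.comul a)).symm

end Coregular

lemma exists_sum_tmul_tmul_eq {R M N P : Type*} [CommSemiring R] [AddCommMonoid M]
    [AddCommMonoid N] [AddCommMonoid P] [Module R M] [Module R N] [Module R P]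
    (t : M ⊗[R] (N ⊗[R] P)) :
    ∃ (κ : Type) (_ : Fintype κ) (m : κ → M) (n : κ → N) (p : κ → P),
      t = ∑ i, m i ⊗ₜ[R] (n i ⊗ₜ[R] p i) := by
  obtain ⟨k, m, u, rfl⟩ := TensorProduct.exists_sum_tmul_eq t
  choose l n p hu using fun j => TensorProduct.exists_sum_tmul_eq (u j)
  refine ⟨(j : Fin k) × Fin (l j), inferInstance, fun i => m i.1, fun i => n i.1 i.2,
    fun i => p i.1 i.2, ?_⟩
  simp only [Fintype.sum_sigma, ← TensorProduct.tmul_sum, ← hu]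

section Mul

variable {R A κ : Type*} [CommSemiring R] [Semiring A] [Bialgebra R A] [Fintype κ]
  {f : A →ₗ[R] R} {g h : κ → A →ₗ[R] R}

lemma comul_mul_eq_sum {ι : Type*} [Fintype ι] {a b : A} {a1 a2 : κ → A} {b1 b2 : ι → A}
    (ha : Coalgebra.comul (R := R) a = ∑ i, a1 i ⊗ₜ[R] a2 i)
    (hb : Coalgebra.comul (R := R) b = ∑ j, b1 j ⊗ₜ[R] b2 j) :
    Coalgebra.comul (R := R) (a * b) =
      ∑ s : κ × ι, (a1 s.1 * b1 s.2) ⊗ₜ[R] (a2 s.1 * b2 s.2) := by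
  simp [ha, hb, Finset.sum_mul_sum, Fintype.sum_prod_type]

lemma leftCoregular_mul (hf : ∀ a b, f (a * b) = ∑ i, g i a * h i b) (a b : A) :
    leftCoregular f (a * b) = ∑ i, leftCoregular (g i) a * leftCoregular (h i) b := by
  obtain ⟨n, a1, a2, ha⟩ := TensorProduct.exists_sum_tmul_eq (Coalgebra.comul (R := R) a)
  obtain ⟨m, b1, b2, hb⟩ := TensorProduct.exists_sum_tmul_eq (Coalgebra.comul (R := R) b)
  simp_rw [leftCoregular_apply_of_comul_eq ha, leftCoregular_apply_of_comul_eq hb,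
    leftCoregular_apply_of_comul_eq (comul_mul_eq_sum ha hb), hf, Finset.sum_smul,
    Finset.sum_mul_sum, smul_mul_smul_comm]
  rw [Finset.sum_comm]
  simp only [Fintype.sum_prod_type]

lemma rightCoregular_mul (hf : ∀ a b, f (a * b) = ∑ i, g i a * h i b) (a b : A) :
    rightCoregular f (a * b) = ∑ i, rightCoregular (g i) a * rightCoregular (h i) b := by
  obtain ⟨n, a1, a2, ha⟩ := TensorProduct.exists_sum_tmul_eq (Coalgebra.comul (R := R) a)
  obtain ⟨m, b1, b2, hb⟩ := TensorProduct.exists_sum_tmul_eq (Coalgebra.comul (R := R) b)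
  simp_rw [rightCoregular_apply_of_comul_eq ha, rightCoregular_apply_of_comul_eq hb,
    rightCoregular_apply_of_comul_eq (comul_mul_eq_sum ha hb), hf, Finset.sum_smul,
    Finset.sum_mul_sum, smul_mul_smul_comm]
  rw [Finset.sum_comm]
  simp only [Fintype.sum_prod_type]

end Mul

section Bialgebra

variable {R A : Type u} [CommRing R] [Ring A] [Bialgebra R A] {ρ ρt : A →ₗ[R] A →ₗ[R] R}
variable {κ ι : Type*} [Fintype κ] [Fintype ι] {a b : A} {a1 a2 a3 : κ → A} {b1 b2 b3 : ι → A}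

lemma leftCoregular_rightCoregular_apply_of_comul2_eq
    (ha : comul2 (R := R) a = ∑ i, a1 i ⊗ₜ[R] (a2 i ⊗ₜ[R] a3 i)) (f g : A →ₗ[R] R) :
    leftCoregular f (rightCoregular g a) = ∑ i, (f (a3 i) * g (a1 i)) • a2 i := by
  rw [leftCoregular_rightCoregular_eq_lid_map]
  change TensorProduct.lid R A (TensorProduct.map _ _ (comul2 a)) = _
  simp [ha, smul_smul]

-- `IsDQT`, `IsCopConvInv` and `CovChar` quantify over families indexed by finsets of `ℕ`; extending
-- along an injection into `ℕ` makes them applicable to any finite index type.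
lemma IsDQT.mul_left_eq_sum (hρ : IsDQT ρ) (a b : A) {c : A} {c1 c2 : κ → A}
    (hc : Coalgebra.comul (R := R) c = ∑ i, c1 i ⊗ₜ[R] c2 i) :
    ρ (a * b) c = ∑ i, ρ a (c1 i) * ρ b (c2 i) := by
  obtain ⟨e, he⟩ := Countable.exists_injective_nat κ
  simpa [he.extend_apply, hc] using
    hρ.1 a b c (Finset.univ.map ⟨e, he⟩) (e.extend c1 0) (e.extend c2 0)

lemma IsDQT.sum_smul_mul_eq (hρ : IsDQT ρ)
    (ha : Coalgebra.comul (R := R) a = ∑ i, a1 i ⊗ₜ[R] a2 i)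
    (hb : Coalgebra.comul (R := R) b = ∑ j, b1 j ⊗ₜ[R] b2 j) :
    ∑ i, ∑ j, ρ (a2 i) (b2 j) • (b1 j * a1 i) = ∑ i, ∑ j, ρ (a1 i) (b1 j) • (a2 i * b2 j) := by
  obtain ⟨e, he⟩ := Countable.exists_injective_nat κ
  obtain ⟨d, hd⟩ := Countable.exists_injective_nat ι
  simpa [he.extend_apply, hd.extend_apply, ha, hb] using
    hρ.2.2.2.2 a b (Finset.univ.map ⟨e, he⟩) (Finset.univ.map ⟨d, hd⟩)
      (e.extend a1 0) (e.extend a2 0) (d.extend b1 0) (d.extend b2 0)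

lemma IsCopConvInv.sum_mul_eq_counit_mul (hρt : IsCopConvInv ρ ρt)
    (ha : Coalgebra.comul (R := R) a = ∑ i, a1 i ⊗ₜ[R] a2 i)
    (hb : Coalgebra.comul (R := R) b = ∑ j, b1 j ⊗ₜ[R] b2 j) :
    ∑ i, ∑ j, ρt (a1 i) (b2 j) * ρ (a2 i) (b1 j) =
      Coalgebra.counit (R := R) a * Coalgebra.counit (R := R) b := by
  obtain ⟨e, he⟩ := Countable.exists_injective_nat κ
  obtain ⟨d, hd⟩ := Countable.exists_injective_nat ι
  have h := hρt a b (Finset.univ.map ⟨e, he⟩) (Finset.univ.map ⟨d, hd⟩)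
    (e.extend a1 0) (e.extend a2 0) (d.extend b1 0) (d.extend b2 0)
    (by simpa [he.extend_apply]) (by simpa [hd.extend_apply])
  simpa [he.extend_apply, hd.extend_apply] using h.1

lemma CovChar.apply_eq_sum {cmul : A → A → A} (hcmul : CovChar ρ ρt cmul)
    (ha : comul2 (R := R) a = ∑ i, a1 i ⊗ₜ[R] (a2 i ⊗ₜ[R] a3 i))
    (hb : comul2 (R := R) b = ∑ j, b1 j ⊗ₜ[R] (b2 j ⊗ₜ[R] b3 j)) :
    cmul a b = ∑ i, ∑ j, (ρt (a3 i) (b1 j) * ρ (a1 i) (b2 j)) • (a2 i * b3 j) := by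
  obtain ⟨e, he⟩ := Countable.exists_injective_nat κ
  obtain ⟨d, hd⟩ := Countable.exists_injective_nat ι
  simpa [he.extend_apply, hd.extend_apply, ha, hb] using
    hcmul a b (Finset.univ.map ⟨e, he⟩) (Finset.univ.map ⟨d, hd⟩) (e.extend a1 0) (e.extend a2 0)
      (e.extend a3 0) (d.extend b1 0) (d.extend b2 0) (d.extend b3 0)

end Bialgebra

/-- The family `x` is a multiplicative matrix (a matrix corepresentation of the bialgebra):
`Δ x_ij = ∑ k, x_ik ⊗ x_kj` and `ε x_ij = δ_ij`. -/
structure IsMultiplicativeMatrix (R : Type*) {A ι : Type*} [CommSemiring R] [AddCommMonoid A]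
    [Module R A] [Coalgebra R A] [Fintype ι] [DecidableEq ι] (x : ι → ι → A) : Prop where
  comul_apply (i j : ι) : Coalgebra.comul (R := R) (x i j) = ∑ k, x i k ⊗ₜ[R] x k j
  counit_apply (i j : ι) : Coalgebra.counit (R := R) (x i j) = if i = j then 1 else 0

section Matrix

variable {R A : Type u} {ι : Type*} [CommRing R] [Ring A] [Bialgebra R A] [Fintype ι]
  [DecidableEq ι] {ρ ρt : A →ₗ[R] A →ₗ[R] R} {cmul : A → A → A} {x : ι → ι → A}

lemma IsMultiplicativeMatrix.comul2_apply (hx : IsMultiplicativeMatrix R x) (i j : ι) :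
    comul2 (R := R) (x i j) = ∑ p : ι × ι, x i p.1 ⊗ₜ[R] (x p.1 p.2 ⊗ₜ[R] x p.2 j) := by
  simp [comul2, hx.comul_apply, TensorProduct.tmul_sum, Fintype.sum_prod_type]

lemma IsMultiplicativeMatrix.leftCoregular_apply (hx : IsMultiplicativeMatrix R x)
    (f : A →ₗ[R] R) (i j : ι) : leftCoregular f (x i j) = ∑ k, f (x k j) • x i k :=
  leftCoregular_apply_of_comul_eq (hx.comul_apply i j) f

lemma IsMultiplicativeMatrix.rightCoregular_apply (hx : IsMultiplicativeMatrix R x)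
    (f : A →ₗ[R] R) (i j : ι) : rightCoregular f (x i j) = ∑ k, f (x i k) • x k j :=
  rightCoregular_apply_of_comul_eq (hx.comul_apply i j) f

lemma IsDQT.sum_mul_leftCoregular (hρ : IsDQT ρ) (hx : IsMultiplicativeMatrix R x) (a : A)
    (i j : ι) :
    ∑ k, x i k * leftCoregular (ρ.flip (x k j)) a =
      ∑ k, rightCoregular (ρ.flip (x i k)) a * x k j := by
  obtain ⟨n, a1, a2, ha⟩ := TensorProduct.exists_sum_tmul_eq (Coalgebra.comul (R := R) a)
  simp_rw [leftCoregular_apply_of_comul_eq ha, rightCoregular_apply_of_comul_eq ha,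
    Finset.mul_sum, Finset.sum_mul, mul_smul_comm, smul_mul_assoc]
  rw [Finset.sum_comm, Finset.sum_comm (s := Finset.univ (α := ι))]
  exact hρ.sum_smul_mul_eq ha (hx.comul_apply i j)

lemma IsDQT.leftCoregular_matrix_mul (hρ : IsDQT ρ) (hx : IsMultiplicativeMatrix R x)
    (i j : ι) (a b : A) :
    leftCoregular (ρ.flip (x i j)) (a * b) =
      ∑ k, leftCoregular (ρ.flip (x i k)) a * leftCoregular (ρ.flip (x k j)) b :=
  leftCoregular_mul (g := fun k => ρ.flip (x i k)) (h := fun k => ρ.flip (x k j))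
    (fun a b => hρ.mul_left_eq_sum a b (hx.comul_apply i j)) a b

lemma IsDQT.rightCoregular_matrix_mul (hρ : IsDQT ρ) (hx : IsMultiplicativeMatrix R x)
    (i j : ι) (a b : A) :
    rightCoregular (ρ.flip (x i j)) (a * b) =
      ∑ k, rightCoregular (ρ.flip (x i k)) a * rightCoregular (ρ.flip (x k j)) b :=
  rightCoregular_mul (g := fun k => ρ.flip (x i k)) (h := fun k => ρ.flip (x k j))
    (fun a b => hρ.mul_left_eq_sum a b (hx.comul_apply i j)) a b

lemma IsCopConvInv.sum_leftCoregular_leftCoregular (hρt : IsCopConvInv ρ ρt)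
    (hx : IsMultiplicativeMatrix R x) (a : A) (i j : ι) :
    ∑ k, leftCoregular (ρt.flip (x k j)) (leftCoregular (ρ.flip (x i k)) a) =
      if i = j then a else 0 := by
  have hconv : ∑ k, (WithConv.toConv (ρt.flip (x k j)) *
      WithConv.toConv (ρ.flip (x i k))).ofConv =
        if i = j then Coalgebra.counit (R := R) (A := A) else 0 := by
    ext b
    obtain ⟨n, b1, b2, hb⟩ := TensorProduct.exists_sum_tmul_eq (Coalgebra.comul (R := R) b)
    have h := hρt.sum_mul_eq_counit_mul hb (hx.comul_apply i j)
    rw [Finset.sum_comm, hx.counit_apply] at h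
    split_ifs with hij <;> simpa [LinearMap.convMul_def, hb, hij] using h
  simp_rw [leftCoregular_leftCoregular, ← LinearMap.sum_apply, ← map_sum, hconv]
  split_ifs <;> simp [leftCoregular_counit]

lemma CovChar.apply_matrix_eq_sum (hcmul : CovChar ρ ρt cmul) (hx : IsMultiplicativeMatrix R x)
    (a : A) (i j : ι) :
    cmul a (x i j) = ∑ k, ∑ l,
      leftCoregular (ρt.flip (x i k)) (rightCoregular (ρ.flip (x k l)) a) * x l j := by
  obtain ⟨κ, _, a1, a2, a3, ha⟩ := exists_sum_tmul_tmul_eq (comul2 (R := R) a)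
  simp_rw [hcmul.apply_eq_sum ha (hx.comul2_apply i j), Fintype.sum_prod_type,
    leftCoregular_rightCoregular_apply_of_comul2_eq ha, LinearMap.flip_apply,
    Finset.sum_mul, smul_mul_assoc]
  rw [Finset.sum_comm]
  exact Finset.sum_congr rfl fun k _ => Finset.sum_comm

lemma CovChar.smul_matrix (hcmul : CovChar ρ ρt cmul) (hx : IsMultiplicativeMatrix R x)
    (t : R) (a : A) (i j : ι) : cmul (t • a) (x i j) = t • cmul a (x i j) := by
  simp only [hcmul.apply_matrix_eq_sum hx, map_smul, smul_mul_assoc, Finset.smul_sum]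

lemma CovChar.zero_matrix (hcmul : CovChar ρ ρt cmul) (hx : IsMultiplicativeMatrix R x)
    (i j : ι) : cmul 0 (x i j) = 0 := by
  simpa using hcmul.smul_matrix hx 0 0 i j

lemma CovChar.sum_apply_leftCoregular_matrix (hcmul : CovChar ρ ρt cmul) (hρt : IsCopConvInv ρ ρt)
    (hx : IsMultiplicativeMatrix R x) (a : A) (i j : ι) :
    ∑ k, cmul (leftCoregular (ρ.flip (x i k)) a) (x k j) =
      ∑ l, rightCoregular (ρ.flip (x i l)) a * x l j := by
  calc
    _ = ∑ m, ∑ l, (∑ k, leftCoregular (ρt.flip (x k m)) (leftCoregular (ρ.flip (x i k))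
          (rightCoregular (ρ.flip (x m l)) a))) * x l j := by
      simp_rw [hcmul.apply_matrix_eq_sum hx, ← leftCoregular_rightCoregular, Finset.sum_mul]
      rw [Finset.sum_comm]
      exact Finset.sum_congr rfl fun m _ => Finset.sum_comm
    _ = _ := by simp [hρt.sum_leftCoregular_leftCoregular hx, ite_mul]

end Matrix

/-- The value `𝓡(x^i_j, x^k_l)` of the standard R-matrix of Cartan type A with entries indexed by a
linear order, scaled by the normalization `c` (which is `q^{-1/n}` for `O_q(M_n)`). -/
def standardRMatrix {R ι : Type*} [CommRing R] [LinearOrder ι] (c q : Rˣ) (i j k l : ι) : R :=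
  c * ((if i = j then 1 else 0) * (if k = l then 1 else 0) * (if j = l then (q : R) else 1)
    + ((q : R) - ((q⁻¹ : Rˣ) : R)) * (if l < j then 1 else 0) *
        (if i = l then 1 else 0) * (if k = j then 1 else 0))

section Standard

variable {R A : Type u} {ι : Type*} [CommRing R] [Ring A] [Bialgebra R A] [Fintype ι]
  [LinearOrder ι] {c q : Rˣ} {ρ ρt : A →ₗ[R] A →ₗ[R] R} {cmul : A → A → A} {x : ι → ι → A}
  (hx : IsMultiplicativeMatrix R x) (hρ : IsDQT ρ)
  (hρx : ∀ i j k l, ρ (x i j) (x k l) = standardRMatrix c q i j k l)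

include hx hρx

lemma leftCoregular_standard_apply (p r i j : ι) :
    leftCoregular (ρ.flip (x p r)) (x i j) = (c : R) •
      ((if p = r then (if j = r then (q : R) else 1) • x i j else 0) +
        if r < j ∧ p = j then ((q : R) - (q⁻¹ : Rˣ)) • x i r else 0) := by
  simp only [hx.leftCoregular_apply, LinearMap.flip_apply, hρx, standardRMatrix, mul_smul,
    ← Finset.smul_sum, add_smul, Finset.sum_add_distrib]
  congr 2
  · by_cases p = r <;> simp [ite_smul, *]
  · split_ifs with h <;> simp_all [ite_smul]

lemma rightCoregular_standard_apply (k l j : ι) :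
    rightCoregular (ρ.flip (x k l)) (x k j) =
      if k = l then (c * q : R) • x k j else 0 := by
  have hR (i : ι) : standardRMatrix c q k i k l = if k = i ∧ k = l then (c * q : R) else 0 := by
    obtain rfl | hi := eq_or_ne k i
    · obtain rfl | hl := eq_or_ne k l <;> simp [standardRMatrix, *]
    · simp [standardRMatrix, hi]
  simp [hx.rightCoregular_apply, hρx, hR, ite_smul, ite_and]

include hρ

lemma row_mul_eq_smul_of_lt {j l : ι} (hjl : j < l) (k : ι) :
    x k l * x k j = (q : R) • (x k j * x k l) := by
  have h := hρ.sum_mul_leftCoregular hx (x k j) k l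
  simp only [leftCoregular_standard_apply hx hρx, rightCoregular_standard_apply hx hρx, hjl.ne,
    hjl.not_gt] at h
  refine c.isUnit.smul_left_cancel.1 ?_
  simpa [mul_smul] using h

lemma leftCoregular_standard_mul (a : A) (p r i j : ι) :
    leftCoregular (ρ.flip (x p r)) (a * x i j) = (c : R) •
      ((if j = r then (q : R) else 1) • (leftCoregular (ρ.flip (x p r)) a * x i j) +
        if r < j then ((q : R) - (q⁻¹ : Rˣ)) • (leftCoregular (ρ.flip (x p j)) a * x i r)
          else 0) := by
  simp only [hρ.leftCoregular_matrix_mul hx, leftCoregular_standard_apply hx hρx, mul_smul_comm,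
    ← Finset.smul_sum, mul_add, Finset.sum_add_distrib]
  simp [ite_and]

lemma leftCoregular_standard_diag_pow (k r : ι) (N : ℕ) :
    leftCoregular (ρ.flip (x k r)) (x k k ^ (N + 1)) = (c : R) ^ (N + 1) •
      ((if k = r then (q : R) ^ (N + 1) • x k k ^ (N + 1) else 0) +
        if r < k then ((q : R) ^ (N + 1) - ((q⁻¹ : Rˣ) : R) ^ (N + 1)) • (x k k ^ N * x k r)
          else 0) := by
  induction N generalizing r with
  | zero =>
    rw [zero_add, pow_one, leftCoregular_standard_apply hx hρx]
    obtain rfl | h := eq_or_ne k r <;> simp [*]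
  | succ N ih =>
    rw [pow_succ, leftCoregular_standard_mul hx hρ hρx, ih, ih]
    obtain h | rfl | h := lt_trichotomy r k
    · have hcomm : x k r * x k k = ((q⁻¹ : Rˣ) : R) • (x k k * x k r) := by
        simp [row_mul_eq_smul_of_lt hx hρ hρx h, smul_smul]
      simp only [h, h.ne', if_true, if_false, zero_add, lt_irrefl, add_zero, mul_assoc, hcomm,
        smul_mul_assoc, mul_smul_comm, smul_smul, pow_succ (x k k)]
      module
    · simp only [if_true, lt_irrefl, if_false, add_zero, smul_mul_assoc]
      module
    · simp [h.ne, h.not_gt]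

lemma rightCoregular_standard_diag_pow (k l : ι) (N : ℕ) :
    rightCoregular (ρ.flip (x k l)) (x k k ^ (N + 1)) =
      if k = l then (c * q : R) ^ (N + 1) • x k k ^ (N + 1) else 0 := by
  induction N with
  | zero => simp [rightCoregular_standard_apply hx hρx]
  | succ N ih =>
    rw [pow_succ', hρ.rightCoregular_matrix_mul hx]
    simp [rightCoregular_standard_apply hx hρx, ih, pow_succ' _ (N + 1), smul_smul]

lemma CovChar.apply_leftCoregular_diag_pow (hcmul : CovChar ρ ρt cmul) (k r l : ι) (N : ℕ) :
    cmul (leftCoregular (ρ.flip (x k r)) (x k k ^ (N + 1))) (x r l) = (c : R) ^ (N + 1) •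
      ((if k = r then (q : R) ^ (N + 1) • cmul (x k k ^ (N + 1)) (x k l) else 0) +
        if r < k then ((q : R) ^ (N + 1) - ((q⁻¹ : Rˣ) : R) ^ (N + 1)) •
          cmul (x k k ^ N * x k r) (x r l) else 0) := by
  rw [leftCoregular_standard_diag_pow hx hρ hρx, hcmul.smul_matrix hx]
  obtain h | rfl | h := lt_trichotomy r k
  · simp [h, h.ne', hcmul.smul_matrix hx]
  · simp [hcmul.smul_matrix hx]
  · simp [h.ne, h.not_gt, hcmul.zero_matrix hx]

end Standard

lemma pow_sub_inv_pow_eq_mul {R : Type u} [CommRing R] (q : Rˣ) (N : ℕ) :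
    (q : R) ^ N - ((q⁻¹ : Rˣ) : R) ^ N = (q : R) ^ N * (1 - qzpow q (-(2 * N))) := by
  have hzpow : q ^ (-(2 * N : ℤ)) = (q ^ N)⁻¹ * (q ^ N)⁻¹ := by
    rw [two_mul, neg_add, zpow_add, zpow_neg, zpow_natCast]
  simp only [qzpow, hzpow, ← Units.val_pow_eq_pow_val, inv_pow, Units.val_mul, mul_sub, mul_one,
    Units.mul_inv_cancel_left]

theorem diag_power_mul_recursion_general
    {R A : Type u} {ι : Type*} [CommRing R] [Ring A] [Bialgebra R A] [Fintype ι] [LinearOrder ι]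
    {c q : Rˣ} {ρ ρt : A →ₗ[R] A →ₗ[R] R} {x : ι → ι → A} (hx : IsMultiplicativeMatrix R x)
    (hρ : IsDQT ρ) (hρx : ∀ i j k l, ρ (x i j) (x k l) = standardRMatrix c q i j k l)
    (hρt : IsCopConvInv ρ ρt) {cmul : A → A → A} (hcmul : CovChar ρ ρt cmul)
    {N : ℕ} (hN : 1 ≤ N) (k l : ι) :
    x k k ^ N * x k l =
      cmul (x k k ^ N) (x k l) +
        (1 - qzpow q (-(2 * (N : ℤ)))) •
          ∑ β ∈ Finset.univ.filter (fun β : ι => β < k),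
            cmul (x k k ^ (N - 1) * x k β) (x β l) := by
  obtain ⟨N, rfl⟩ := Nat.exists_eq_add_of_le' hN
  have hsum := hcmul.sum_apply_leftCoregular_matrix hρt hx (x k k ^ (N + 1)) k l
  simp only [hcmul.apply_leftCoregular_diag_pow hx hρ hρx,
    rightCoregular_standard_diag_pow hx hρ hρx, ← Finset.smul_sum, Finset.sum_add_distrib,
    Finset.sum_ite_eq, ite_mul, zero_mul, Finset.mem_univ, if_true, mul_pow, mul_smul,
    smul_mul_assoc, ← Finset.sum_filter] at hsum
  rw [pow_sub_inv_pow_eq_mul, mul_smul, ← smul_add] at hsum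
  exact ((q.isUnit.pow _).smul_left_cancel.1 ((c.isUnit.pow _).smul_left_cancel.1 hsum)).symm

/-- Recursion: in the common underlying module of `O_q(M_n)` and `B_q(M_n)`,
`(x^k_k)^N x^k_l = ((x^k_k)^N) ⬝ x^k_l + (1 − q^{−2N}) ∑_{β<k} ((x^k_k)^{N−1} x^k_β) ⬝ x^β_l`,
where juxtaposed products and powers are taken in `O_q(M_n)` and `⬝` is the
covariantized product. -/
theorem diag_power_mul_recursion
    {R : Type u} [CommRing R] (n : ℕ) (hn : 2 ≤ n) (qr : Rˣ)
    {A : Type u} [Ring A] [Bialgebra R A] (x : Fin n → Fin n → A)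
    (hx : OqMnRels n (qr ^ n) x)
    (hxuniv : ∀ (B : Type u) [Ring B] [Algebra R B] (y : Fin n → Fin n → B),
      OqMnRels n (qr ^ n) y → ∃! f : A →ₐ[R] B, ∀ i j, f (x i j) = y i j)
    (hΔ : ∀ i j, Coalgebra.comul (R := R) (x i j) = ∑ k, x i k ⊗ₜ[R] x k j)
    (hε : ∀ i j, Coalgebra.counit (R := R) (x i j) = if i = j then (1 : R) else 0)
    (ρ : A →ₗ[R] A →ₗ[R] R) (hρ : IsDQT ρ)
    (hρx : ∀ i j k l, ρ (x i j) (x k l) = RmatVal n qr i j k l)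
    (ρt : A →ₗ[R] A →ₗ[R] R) (hρt : IsCopConvInv ρ ρt)
    (cmul : A → A → A) (hcmul : CovChar ρ ρt cmul)
    (N : ℕ) (hN : 1 ≤ N) (k l : Fin n) :
    x k k ^ N * x k l =
      cmul (x k k ^ N) (x k l) +
        (1 - qzpow (qr ^ n) (-(2 * (N : ℤ)))) •
          ∑ β ∈ Finset.univ.filter (fun β : Fin n => β < k),
            cmul (x k k ^ (N - 1) * x k β) (x β l) :=
  diag_power_mul_recursion_general ⟨hΔ, hε⟩ hρ (c := qr⁻¹) hρx hρt hcmul hN k l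

end
end

section
/- Let n ≥ 2 and R a commutative ring with invertible element q^{1/n}, q := (q^{1/n})^n. In the common underlying R-module of O_q(M_n) and B_q(M_n), for every integer N ≥ 1 and all 1 ≤ k, l ≤ n: (x^k_k)^N x^k_l = Σ_{i=0}^{N} Σ_β (Π_{j=1}^{i} (1 − q^{−2(N+1−j)})) ((x^k_k)^{N−i}) ⬝ x^{β₁}_{β₂} ⬝ x^{β₂}_{β₃} ⬝ ⋯ ⬝ x^{β_i}_{β_{i+1}} ⬝ x^{β_{i+1}}_l, where the inner sum runs over all tuples β = (β₁, …, β_{i+1}) with β₁ = k and 1 ≤ β_j < k for all 1 < j ≤ i + 1; here powers (x^k_k)^m and the left-hand side product are taken with the original product of O_q(M_n), and ⬝ is the covariantized product. -/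
open scoped TensorProduct BigOperators

noncomputable section

universe u

/-!
Write `P_b` for right multiplication `a ↦ a ⬝ b`, `R_b` for right multiplication `a ↦ a b`, and
let `L_b a = a₍₁₎ ρ(a₍₂₎, b)` and `Λ_b a = ρ(a₍₁₎, b) a₍₂₎`. The convolution inverse in the
definition of `⬝` cancels when `P` is composed with `L`, which leaves
`P_{b₍₂₎} L_{b₍₁₎} = R_{b₍₂₎} Λ_{b₍₁₎}`. For `b = x^k_l`, applied to a power of `x^k_k`, on which
`L` and `Λ` are explicit, this reads
`(x^k_k)^{N+1} x^k_l = (x^k_k)^{N+1} ⬝ x^k_l + (1 - q^{-2(N+1)}) ∑_{m<k} ((x^k_k)^N x^k_m) ⬝ x^m_l`,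
and induction on `N`, with associativity of `⬝`, gives the sum over paths. The same identity,
applied to products of entries of two multiplicative matrices, proves the associativity.
-/

section Coregular

open Coalgebra LinearMap TensorProduct WithConv

variable {R A : Type*} [CommRing R] [AddCommGroup A] [Module R A] [Coalgebra R A]

/-- The left coregular action `φ ⇀ a = φ(a₍₂₎) a₍₁₎` of the convolution algebra. -/
def leftHit : WithConv (A →ₗ[R] R) →ₗ[R] Module.End R A where
  toFun φ := (TensorProduct.rid R A).toLinearMap ∘ₗ φ.ofConv.lTensor A ∘ₗ comul
  map_add' φ ψ := by ext; simp [lTensor_add]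
  map_smul' c φ := by ext; simp [lTensor_smul]

/-- The right coregular action `a ↼ φ = φ(a₍₁₎) a₍₂₎` of the convolution algebra. -/
def rightHit : WithConv (A →ₗ[R] R) →ₗ[R] Module.End R A where
  toFun φ := (TensorProduct.lid R A).toLinearMap ∘ₗ φ.ofConv.rTensor A ∘ₗ comul
  map_add' φ ψ := by ext; simp [rTensor_add]
  map_smul' c φ := by ext; simp [rTensor_smul]

variable {a : A} {ι : Type*}

lemma leftHit_apply (φ : WithConv (A →ₗ[R] R)) (r : Repr R a ι) :
    leftHit φ a = ∑ i ∈ r.index, φ (r.right i) • r.left i := by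
  simp [leftHit, ← r.eq]

lemma rightHit_apply (φ : WithConv (A →ₗ[R] R)) (r : Repr R a ι) :
    rightHit φ a = ∑ i ∈ r.index, φ (r.left i) • r.right i := by
  simp [rightHit, ← r.eq]

lemma leftHit_mul (φ ψ : WithConv (A →ₗ[R] R)) :
    leftHit (φ * ψ) = leftHit φ * leftHit ψ := by
  ext a
  let r := ℛ R a
  have coassoc := congrArg
    ((TensorProduct.rid R A).toLinearMap ∘ₗ (mul' R R ∘ₗ map φ.ofConv ψ.ofConv).lTensor A)
    (sum_tmul_tmul_eq r (fun i ↦ ℛ R (r.left i)) (fun i ↦ ℛ R (r.right i)))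
  simpa [leftHit_apply _ r, fun i ↦ leftHit_apply φ (ℛ R (r.left i)), mul_comm, Finset.sum_smul,
    fun i ↦ (ℛ R (r.right i)).convMul_apply φ ψ, Finset.smul_sum, smul_smul] using coassoc.symm

lemma rightHit_mul (φ ψ : WithConv (A →ₗ[R] R)) :
    rightHit (φ * ψ) = rightHit ψ * rightHit φ := by
  ext a
  let r := ℛ R a
  have coassoc := congrArg ((TensorProduct.lid R A).toLinearMap ∘ₗ
      (mul' R R ∘ₗ map φ.ofConv ψ.ofConv).rTensor A ∘ₗ
        (TensorProduct.assoc R A A A).symm.toLinearMap)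
    (sum_tmul_tmul_eq r (fun i ↦ ℛ R (r.left i)) (fun i ↦ ℛ R (r.right i)))
  simpa [rightHit_apply _ r, fun i ↦ rightHit_apply ψ (ℛ R (r.right i)), Finset.sum_smul,
    fun i ↦ (ℛ R (r.left i)).convMul_apply φ ψ, Finset.smul_sum, smul_smul] using coassoc

lemma commute_leftHit_rightHit (φ ψ : WithConv (A →ₗ[R] R)) :
    Commute (leftHit φ) (rightHit ψ) := by
  ext a
  let r := ℛ R a
  have coassoc := congrArg ((TensorProduct.lid R A).toLinearMap ∘ₗ
      map ψ.ofConv ((TensorProduct.rid R A).toLinearMap ∘ₗ φ.ofConv.lTensor A))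
    (sum_tmul_tmul_eq r (fun i ↦ ℛ R (r.left i)) (fun i ↦ ℛ R (r.right i)))
  simpa [leftHit_apply _ r, rightHit_apply _ r, fun i ↦ rightHit_apply ψ (ℛ R (r.left i)),
    fun i ↦ leftHit_apply φ (ℛ R (r.right i)), Finset.smul_sum, smul_smul, mul_comm]
    using coassoc.symm

lemma leftHit_one : leftHit (1 : WithConv (A →ₗ[R] R)) = 1 := by
  ext a
  simp [leftHit, LinearMap.convOne_def]

section Pairing

variable {B : Type*} [AddCommGroup B] [Module R B]

/-- The action `b ↦ (a ↦ a₍₁₎ ρ(a₍₂₎, b))` on the left-hand side of a pairing `ρ`. -/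
def leftAct (ρ : A →ₗ[R] B →ₗ[R] R) : B →ₗ[R] Module.End R A :=
  leftHit ∘ₗ (WithConv.linearEquiv R (A →ₗ[R] R)).symm.toLinearMap ∘ₗ ρ.flip

/-- The action `b ↦ (a ↦ ρ(a₍₁₎, b) a₍₂₎)` on the left-hand side of a pairing `ρ`. -/
def rightAct (ρ : A →ₗ[R] B →ₗ[R] R) : B →ₗ[R] Module.End R A :=
  rightHit ∘ₗ (WithConv.linearEquiv R (A →ₗ[R] R)).symm.toLinearMap ∘ₗ ρ.flip

lemma leftAct_apply (ρ : A →ₗ[R] B →ₗ[R] R) (r : Repr R a ι) (b : B) :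
    leftAct ρ b a = ∑ i ∈ r.index, ρ (r.right i) b • r.left i :=
  leftHit_apply _ r

lemma rightAct_apply (ρ : A →ₗ[R] B →ₗ[R] R) (r : Repr R a ι) (b : B) :
    rightAct ρ b a = ∑ i ∈ r.index, ρ (r.left i) b • r.right i :=
  rightHit_apply _ r

lemma commute_leftAct_rightAct {C : Type*} [AddCommGroup C] [Module R C]
    (ρ : A →ₗ[R] B →ₗ[R] R) (σ : A →ₗ[R] C →ₗ[R] R) (b : B) (c : C) :
    Commute (leftAct ρ b) (rightAct σ c) :=
  commute_leftHit_rightHit _ _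

end Pairing

end Coregular

lemma exists_nat_reindex {ι α : Type*} [Nonempty α] (s : Finset ι) (f : ι → α) :
    ∃ (t : Finset ℕ) (g : ℕ → α), ∀ {M : Type u} [AddCommMonoid M] (F : α → M),
      ∑ n ∈ t, F (g n) = ∑ i ∈ s, F (f i) := by
  refine ⟨Finset.range s.card, fun n ↦ if h : n < s.card then f (s.equivFin.symm ⟨n, h⟩)
    else Classical.arbitrary α, fun F ↦ ?_⟩
  rw [← Fin.sum_univ_eq_sum_range (fun n ↦ F (if h : n < s.card then _ else _)),
    ← s.sum_coe_sort, ← s.equivFin.symm.sum_comp]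
  simp

section DQT

open Coalgebra

variable {R : Type u} [CommRing R] {A : Type u} [Ring A] [Bialgebra R A]
  {ρ ρt : A →ₗ[R] A →ₗ[R] R} {cmul : A → A → A}
  {ι κ : Type*} {a b c : A}

lemma IsDQT.apply_mul_left (hρ : IsDQT ρ) (a b : A) (r : Repr R c ι) :
    ρ (a * b) c = ∑ i ∈ r.index, ρ a (r.left i) * ρ b (r.right i) := by
  obtain ⟨t, g, hg⟩ := exists_nat_reindex r.index fun i ↦ (r.left i, r.right i)
  exact (hρ.1 a b c t _ _ (r.eq.symm.trans (hg fun p ↦ p.1 ⊗ₜ p.2).symm)).trans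
    (hg fun p ↦ ρ a p.1 * ρ b p.2)

lemma IsDQT.apply_mul_right (hρ : IsDQT ρ) (r : Repr R a ι) (b c : A) :
    ρ a (b * c) = ∑ i ∈ r.index, ρ (r.left i) c * ρ (r.right i) b := by
  obtain ⟨t, g, hg⟩ := exists_nat_reindex r.index fun i ↦ (r.left i, r.right i)
  exact (hρ.2.1 a b c t _ _ (r.eq.symm.trans (hg fun p ↦ p.1 ⊗ₜ p.2).symm)).trans
    (hg fun p ↦ ρ p.1 c * ρ p.2 b)

lemma IsDQT.mul_comm (hρ : IsDQT ρ) (r : Repr R a ι) (s : Repr R b κ) :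
    ∑ i ∈ r.index, ∑ j ∈ s.index, ρ (r.right i) (s.right j) • (s.left j * r.left i) =
      ∑ i ∈ r.index, ∑ j ∈ s.index, ρ (r.left i) (s.left j) • (r.right i * s.right j) := by
  obtain ⟨t, g, hg⟩ := exists_nat_reindex r.index fun i ↦ (r.left i, r.right i)
  obtain ⟨t', g', hg'⟩ := exists_nat_reindex s.index fun j ↦ (s.left j, s.right j)
  have exchange := hρ.2.2.2.2 a b t t' _ _ _ _ (r.eq.symm.trans (hg fun p ↦ p.1 ⊗ₜ p.2).symm)
    (s.eq.symm.trans (hg' fun p ↦ p.1 ⊗ₜ p.2).symm)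
  rw [← hg fun p ↦ ∑ j ∈ s.index, ρ p.2 (s.right j) • (s.left j * p.1),
    ← hg fun p ↦ ∑ j ∈ s.index, ρ p.1 (s.left j) • (p.2 * s.right j)]
  simpa only [fun i ↦ hg' fun p ↦ ρ (g i).2 p.2 • (p.1 * (g i).1),
    fun i ↦ hg' fun p ↦ ρ (g i).1 p.1 • ((g i).2 * p.2)] using exchange

lemma IsCopConvInv.symm (h : IsCopConvInv ρ ρt) : IsCopConvInv ρt ρ :=
  fun a b s t a₁ a₂ b₁ b₂ ha hb ↦ (h a b s t a₁ a₂ b₁ b₂ ha hb).symm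

lemma IsCopConvInv.sum_apply_mul_apply (hρt : IsCopConvInv ρ ρt) (r : Repr R a ι)
    (s : Repr R b κ) :
    ∑ i ∈ r.index, ∑ j ∈ s.index, ρt (r.left i) (s.right j) * ρ (r.right i) (s.left j) =
      counit (R := R) a * counit (R := R) b := by
  obtain ⟨t, g, hg⟩ := exists_nat_reindex r.index fun i ↦ (r.left i, r.right i)
  obtain ⟨t', g', hg'⟩ := exists_nat_reindex s.index fun j ↦ (s.left j, s.right j)
  have inv := (hρt a b t t' _ _ _ _ (r.eq.symm.trans (hg fun p ↦ p.1 ⊗ₜ p.2).symm)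
    (s.eq.symm.trans (hg' fun p ↦ p.1 ⊗ₜ p.2).symm)).1
  rw [← hg fun p ↦ ∑ j ∈ s.index, ρt p.1 (s.right j) * ρ p.2 (s.left j)]
  simpa only [fun i ↦ hg' fun p ↦ ρt (g i).1 p.2 * ρ (g i).2 p.1] using inv

open WithConv

lemma IsDQT.flip_mul (hρ : IsDQT ρ) (b c : A) :
    toConv (ρ.flip (b * c)) = toConv (ρ.flip c) * toConv (ρ.flip b) := by
  ext a
  rw [(ℛ R a).convMul_apply]
  exact hρ.apply_mul_right (ℛ R a) b c

lemma IsDQT.leftAct_mul (hρ : IsDQT ρ) (b c : A) :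
    leftAct ρ (b * c) = leftAct ρ c * leftAct ρ b :=
  (congrArg leftHit (hρ.flip_mul b c)).trans (leftHit_mul _ _)

lemma IsDQT.rightAct_mul (hρ : IsDQT ρ) (b c : A) :
    rightAct ρ (b * c) = rightAct ρ b * rightAct ρ c :=
  (congrArg rightHit (hρ.flip_mul b c)).trans (rightHit_mul _ _)

lemma IsDQT.leftAct_apply_mul (hρ : IsDQT ρ) (r : Repr R c ι) (a b : A) :
    leftAct ρ c (a * b) =
      ∑ i ∈ r.index, leftAct ρ (r.left i) a * leftAct ρ (r.right i) b := by
  simp only [leftAct_apply ρ ((ℛ R a).mul (ℛ R b)), Repr.mul, Repr.tmul, Repr.induced,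
    LinearMap.mul'_apply, Finset.sum_product, Function.comp_apply, Bialgebra.coe_mulCoalgHom]
  simp only [hρ.apply_mul_left _ _ r, leftAct_apply ρ (ℛ R a), leftAct_apply ρ (ℛ R b),
    Finset.sum_mul_sum, smul_mul_smul_comm, Finset.sum_smul, Finset.sum_comm (s := r.index)]

lemma IsDQT.rightAct_apply_mul (hρ : IsDQT ρ) (r : Repr R c ι) (a b : A) :
    rightAct ρ c (a * b) =
      ∑ i ∈ r.index, rightAct ρ (r.left i) a * rightAct ρ (r.right i) b := by
  simp only [rightAct_apply ρ ((ℛ R a).mul (ℛ R b)), Repr.mul, Repr.tmul, Repr.induced,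
    LinearMap.mul'_apply, Finset.sum_product, Function.comp_apply, Bialgebra.coe_mulCoalgHom]
  simp only [hρ.apply_mul_left _ _ r, rightAct_apply ρ (ℛ R a), rightAct_apply ρ (ℛ R b),
    Finset.sum_mul_sum, smul_mul_smul_comm, Finset.sum_smul, Finset.sum_comm (s := r.index)]

lemma IsDQT.sum_mul_leftAct (hρ : IsDQT ρ) (r : Repr R b ι) (a : A) :
    ∑ i ∈ r.index, r.left i * leftAct ρ (r.right i) a =
      ∑ i ∈ r.index, rightAct ρ (r.left i) a * r.right i := by
  simp only [leftAct_apply ρ (ℛ R a), rightAct_apply ρ (ℛ R a), Finset.mul_sum,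
    Finset.sum_mul, mul_smul_comm, smul_mul_assoc]
  rw [Finset.sum_comm, hρ.mul_comm (ℛ R a) r, Finset.sum_comm]

lemma IsDQT.leftAct_apply_one (hρ : IsDQT ρ) (b : A) :
    leftAct ρ b 1 = counit (R := R) b • 1 := by
  simp [leftAct, leftHit, Algebra.TensorProduct.one_def, hρ.2.2.2.1]

lemma IsDQT.rightAct_apply_one (hρ : IsDQT ρ) (b : A) :
    rightAct ρ b 1 = counit (R := R) b • 1 := by
  simp [rightAct, rightHit, Algebra.TensorProduct.one_def, hρ.2.2.2.1]

lemma IsCopConvInv.sum_leftAct_mul_leftAct (hρt : IsCopConvInv ρ ρt) (r : Repr R b ι) :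
    ∑ i ∈ r.index, leftAct ρt (r.right i) * leftAct ρ (r.left i) =
      counit (R := R) b • 1 := by
  have conv : ∑ i ∈ r.index, toConv (ρt.flip (r.right i)) * toConv (ρ.flip (r.left i)) =
      counit (R := R) b • 1 := by
    ext a
    have inv := hρt.sum_apply_mul_apply (ℛ R a) r
    rw [Finset.sum_comm] at inv
    simpa [(ℛ R a).convMul_apply, mul_comm] using inv
  simpa [leftHit_mul, leftHit_one, leftAct] using congrArg leftHit conv

/-- Right multiplication `b ↦ (a ↦ a * b)`, linear in both variables. -/
abbrev rightMul (R A : Type*) [CommRing R] [Ring A] [Algebra R A] : A →ₗ[R] Module.End R A :=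
  (LinearMap.mul R A).flip

/-- Right multiplication `b ↦ (a ↦ a ⬝ b)` of the covariantized product. -/
def covMulRight (ρ ρt : A →ₗ[R] A →ₗ[R] R) : A →ₗ[R] Module.End R A :=
  TensorProduct.lift ((LinearMap.mul R (Module.End R A)).flip.compl₁₂ (leftAct ρt)
    (TensorProduct.lift ((LinearMap.mul R (Module.End R A)).flip.compl₁₂ (rightAct ρ)
      (rightMul R A)))) ∘ₗ comul2

lemma exists_comul2_eq_sum (a : A) : ∃ (s : Finset ℕ) (a' : ℕ → A × A × A),
    comul2 (R := R) a = ∑ i ∈ s, (a' i).1 ⊗ₜ[R] ((a' i).2.1 ⊗ₜ[R] (a' i).2.2) := by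
  let r := ℛ R a
  obtain ⟨t, g, hg⟩ := exists_nat_reindex (r.index.sigma fun i ↦ (ℛ R (r.right i)).index)
    fun i ↦ (r.left i.1, (ℛ R (r.right i.1)).left i.2, (ℛ R (r.right i.1)).right i.2)
  refine ⟨t, g, ?_⟩
  rw [hg fun p ↦ p.1 ⊗ₜ[R] (p.2.1 ⊗ₜ[R] p.2.2), Finset.sum_sigma]
  simp only [← TensorProduct.tmul_sum, (ℛ R (r.right _)).eq]
  simp [comul2, ← r.eq]

lemma rightAct_leftAct_apply (ρ σ : A →ₗ[R] A →ₗ[R] R) (b c : A) {s : Finset ℕ}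
    {a' : ℕ → A × A × A}
    (ha : comul2 (R := R) a = ∑ i ∈ s, (a' i).1 ⊗ₜ[R] ((a' i).2.1 ⊗ₜ[R] (a' i).2.2)) :
    rightAct ρ b (leftAct σ c a) =
      ∑ i ∈ s, (σ (a' i).2.2 c * ρ (a' i).1 b) • (a' i).2.1 := by
  have sweedler : leftAct σ c (rightAct ρ b a) = (TensorProduct.lid R A).toLinearMap
      (TensorProduct.map (ρ.flip b) ((TensorProduct.rid R A).toLinearMap ∘ₗ
        (σ.flip c).lTensor A) (comul2 (R := R) a)) := by
    simp [comul2, ← (ℛ R a).eq, rightAct_apply ρ (ℛ R a), leftAct, leftHit]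
  rw [← Module.End.mul_apply, ← (commute_leftAct_rightAct σ ρ c b).eq, Module.End.mul_apply,
    sweedler, ha]
  simp [smul_smul, mul_comm]

lemma CovChar.eq_covMulRight (h : CovChar ρ ρt cmul) (a b : A) :
    cmul a b = covMulRight ρ ρt b a := by
  obtain ⟨s, a', ha⟩ := exists_comul2_eq_sum (R := R) a
  obtain ⟨t, b', hb⟩ := exists_comul2_eq_sum (R := R) b
  rw [h a b s t _ _ _ _ _ _ ha hb, Finset.sum_comm]
  simp [covMulRight, hb, rightAct_leftAct_apply _ _ _ _ ha]

lemma IsDQT.leftAct_mul_rightMul (hρ : IsDQT ρ) (r : Repr R c ι) (b : A) :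
    leftAct ρ c * rightMul R A b =
      ∑ i ∈ r.index, rightMul R A (leftAct ρ (r.right i) b) * leftAct ρ (r.left i) := by
  ext a
  simp [hρ.leftAct_apply_mul r]

lemma IsDQT.rightAct_mul_rightMul (hρ : IsDQT ρ) (r : Repr R c ι) (b : A) :
    rightAct ρ c * rightMul R A b =
      ∑ i ∈ r.index, rightMul R A (rightAct ρ (r.right i) b) * rightAct ρ (r.left i) := by
  ext a
  simp [hρ.rightAct_apply_mul r]

end DQT

section MultiplicativeMatrix

/-- A multiplicative matrix: a square matrix of elements of a coalgebra with
`Δ(v i j) = ∑ k, v i k ⊗ v k j` and `ε(v i j) = δ_{ij}`, that is, the matrix of coefficients of a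
comodule that is free of finite rank. -/
structure IsMultiplicativeMatrix_s14 (R : Type*) {A ι : Type*} [CommRing R] [AddCommGroup A]
    [Module R A] [Coalgebra R A] [Fintype ι] [DecidableEq ι] (v : ι → ι → A) : Prop where
  comul : ∀ i j, Coalgebra.comul (R := R) (v i j) = ∑ k, v i k ⊗ₜ[R] v k j
  counit : ∀ i j, Coalgebra.counit (R := R) (v i j) = if i = j then (1 : R) else 0

namespace IsMultiplicativeMatrix_s14

open Coalgebra LinearMap

section Coalgebra

variable {R A ι : Type*} [CommRing R] [AddCommGroup A] [Module R A] [Coalgebra R A]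
  [Fintype ι] [DecidableEq ι] {v : ι → ι → A}

/-- The Sweedler representation `∑ k, v i k ⊗ v k j` of `Δ(v i j)`. -/
@[simps]
def repr (hv : IsMultiplicativeMatrix_s14 R v) (i j : ι) : Repr R (v i j) ι where
  index := Finset.univ
  left k := v i k
  right k := v k j
  eq := (hv.comul i j).symm

variable {B : Type*} [AddCommGroup B] [Module R B]

lemma leftAct_entry (hv : IsMultiplicativeMatrix_s14 R v) (σ : A →ₗ[R] B →ₗ[R] R) (b : B)
    (i j : ι) : leftAct σ b (v i j) = ∑ k, σ (v k j) b • v i k :=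
  leftAct_apply σ (hv.repr i j) b

lemma rightAct_entry (hv : IsMultiplicativeMatrix_s14 R v) (σ : A →ₗ[R] B →ₗ[R] R) (b : B)
    (i j : ι) : rightAct σ b (v i j) = ∑ k, σ (v i k) b • v k j :=
  rightAct_apply σ (hv.repr i j) b

end Coalgebra

variable {R : Type u} [CommRing R] {A : Type u} [Ring A] [Bialgebra R A]
  {ρ ρt : A →ₗ[R] A →ₗ[R] R}
  {ι κ : Type*} [Fintype ι] [DecidableEq ι] [Fintype κ] [DecidableEq κ]
  {v : ι → ι → A} {w : κ → κ → A}

lemma one : IsMultiplicativeMatrix_s14 R (fun _ _ : Unit ↦ (1 : A)) :=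
  ⟨by simp [Algebra.TensorProduct.one_def], by simp⟩

lemma kronecker (hv : IsMultiplicativeMatrix_s14 R v) (hw : IsMultiplicativeMatrix_s14 R w) :
    IsMultiplicativeMatrix_s14 R (fun p r : ι × κ ↦ v p.1 r.1 * w p.2 r.2) where
  comul p r := by
    rw [Bialgebra.comul_mul, hv.comul, hw.comul, Finset.sum_mul_sum, Fintype.sum_prod_type]
    simp
  counit p r := by simp [hv.counit, hw.counit, Prod.ext_iff, ← ite_and, and_comm]

lemma sum_comp_leftAct_comp_leftAct (hv : IsMultiplicativeMatrix_s14 R v)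
    (hρt : IsCopConvInv ρ ρt) {M : Type*} [AddCommGroup M] [Module R M] (f : ι → A →ₗ[R] M)
    (i : ι) : ∑ k, (∑ r, f r ∘ₗ leftAct ρ (v k r)) ∘ₗ leftAct ρt (v i k) = f i := by
  have inv (r : ι) : ∑ k, leftAct ρ (v k r) * leftAct ρt (v i k) = if i = r then 1 else 0 := by
    simpa [hv.counit] using hρt.symm.sum_leftAct_mul_leftAct (hv.repr i r)
  ext a
  have inv_apply (r : ι) : ∑ k, f r (leftAct ρ (v k r) (leftAct ρt (v i k) a)) =
      if i = r then f r a else 0 := by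
    rw [← map_sum]
    simpa [apply_ite, ite_apply] using congr(f r ($(inv r) a))
  simp only [LinearMap.sum_apply, LinearMap.comp_apply]
  rw [Finset.sum_comm]
  simp [inv_apply]

lemma eq_of_sum_comp_leftAct (hv : IsMultiplicativeMatrix_s14 R v) (hρt : IsCopConvInv ρ ρt)
    {M : Type*} [AddCommGroup M] [Module R M] {f g : ι → A →ₗ[R] M}
    (h : ∀ k, ∑ r, f r ∘ₗ leftAct ρ (v k r) = ∑ r, g r ∘ₗ leftAct ρ (v k r)) : f = g := by
  ext1 i
  rw [← hv.sum_comp_leftAct_comp_leftAct hρt f i, ← hv.sum_comp_leftAct_comp_leftAct hρt g i]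
  simp only [h]

lemma covMulRight_entry (hv : IsMultiplicativeMatrix_s14 R v) (i j : ι) :
    covMulRight ρ ρt (v i j) =
      ∑ r, (∑ s, rightMul R A (v s j) * rightAct ρ (v r s)) * leftAct ρt (v i r) := by
  simp [covMulRight, comul2, hv.comul, TensorProduct.tmul_sum, Finset.sum_mul]

lemma sum_covMulRight_mul_leftAct (hv : IsMultiplicativeMatrix_s14 R v) (hρt : IsCopConvInv ρ ρt)
    (i j : ι) :
    ∑ k, covMulRight ρ ρt (v k j) * leftAct ρ (v i k) =
      ∑ k, rightMul R A (v k j) * rightAct ρ (v i k) := by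
  have inv (r : ι) : ∑ k, leftAct ρt (v k r) * leftAct ρ (v i k) = if i = r then 1 else 0 := by
    simpa [hv.counit] using hρt.sum_leftAct_mul_leftAct (hv.repr i r)
  let f (r : ι) : Module.End R A := ∑ s, rightMul R A (v s j) * rightAct ρ (v r s)
  have entry (k : ι) : covMulRight ρ ρt (v k j) = ∑ r, f r * leftAct ρt (v k r) :=
    hv.covMulRight_entry k j
  calc
    _ = ∑ r, f r * ∑ k, leftAct ρt (v k r) * leftAct ρ (v i k) := by
      simp only [entry, Finset.sum_mul, Finset.mul_sum, mul_assoc]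
      exact Finset.sum_comm
    _ = f i := by simp [inv]

lemma sum_apply_leftAct_mul (hv : IsMultiplicativeMatrix_s14 R v) (f : A →ₗ[R] Module.End R A)
    (g : ι → Module.End R A) (c : A) (j : ι) :
    ∑ k, f (leftAct ρ c (v k j)) * g k = ∑ r, ρ (v r j) c • ∑ k, f (v k r) * g k := by
  simp only [hv.leftAct_entry, map_sum, map_smul, Finset.sum_mul, smul_mul_assoc,
    Finset.smul_sum]
  exact Finset.sum_comm

lemma sum_covMulRight_leftAct_mul_leftAct (hv : IsMultiplicativeMatrix_s14 R v)
    (hρt : IsCopConvInv ρ ρt) (c : A) (i j : ι) :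
    ∑ k, covMulRight ρ ρt (leftAct ρ c (v k j)) * leftAct ρ (v i k) =
      ∑ k, rightMul R A (leftAct ρ c (v k j)) * rightAct ρ (v i k) := by
  simp only [hv.sum_apply_leftAct_mul, hv.sum_covMulRight_mul_leftAct hρt]

lemma sum_smul_mul_comm (hv : IsMultiplicativeMatrix_s14 R v) (hw : IsMultiplicativeMatrix_s14 R w)
    (hρ : IsDQT ρ) (i j : ι) (m o : κ) :
    ∑ r, ∑ t, ρ (v r j) (w t o) • (w m t * v i r) =
      ∑ r, ∑ t, ρ (v i r) (w m t) • (v r j * w t o) :=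
  hρ.mul_comm (hv.repr i j) (hw.repr m o)

lemma sum_covMulRight_mul_covMulRight_leftAct (hv : IsMultiplicativeMatrix_s14 R v)
    (hw : IsMultiplicativeMatrix_s14 R w) (hρ : IsDQT ρ) (hρt : IsCopConvInv ρ ρt)
    (k l : ι) (m o : κ) :
    ∑ t, (∑ r, (∑ s, covMulRight ρ ρt (w s o) *
        covMulRight ρ ρt (leftAct ρ (w t s) (v r l))) * leftAct ρ (v k r)) *
          leftAct ρ (w m t) =
      ∑ r, ∑ s, rightMul R A (w s o) * rightAct ρ (w m s) * rightMul R A (v r l) *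
        rightAct ρ (v k r) := by
  have middle (s : κ) : ∑ t, (∑ r, covMulRight ρ ρt (leftAct ρ (w t s) (v r l)) *
        leftAct ρ (v k r)) * leftAct ρ (w m t) =
      ∑ r, leftAct ρ (w m s) * (rightMul R A (v r l) * rightAct ρ (v k r)) := by
    simp only [hv.sum_covMulRight_leftAct_mul_leftAct hρt, Finset.sum_mul, ← mul_assoc,
      hρ.leftAct_mul_rightMul (hw.repr m s), repr_index, repr_left, repr_right]
    rw [Finset.sum_comm]
    simp only [mul_assoc, (commute_leftAct_rightAct ρ ρ _ _).eq]
  calc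
    _ = ∑ s, covMulRight ρ ρt (w s o) * ∑ t, (∑ r,
          covMulRight ρ ρt (leftAct ρ (w t s) (v r l)) * leftAct ρ (v k r)) *
            leftAct ρ (w m t) := by
        simp only [Finset.sum_mul, Finset.mul_sum, mul_assoc]
        exact Finset.sum_comm_cycle
    _ = ∑ r, (∑ s, covMulRight ρ ρt (w s o) * leftAct ρ (w m s)) *
          (rightMul R A (v r l) * rightAct ρ (v k r)) := by
        simp only [middle]
        simp only [Finset.mul_sum, Finset.sum_mul, mul_assoc]
        exact Finset.sum_comm
    _ = _ := by
        simp only [hw.sum_covMulRight_mul_leftAct hρt, Finset.sum_mul, mul_assoc]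

lemma sum_apply_rightAct_mul (hv : IsMultiplicativeMatrix_s14 R v)
    (hw : IsMultiplicativeMatrix_s14 R w) (hρ : IsDQT ρ) (f g : A →ₗ[R] Module.End R A)
    (k l : ι) (m o : κ) :
    ∑ t, ∑ r, (∑ s, f (rightAct ρ (w t s) (v r l) * w s o)) * g (w m t * v k r) =
      ∑ r, ∑ t, ρ (v k r) (w m t) • ∑ p : ι × κ, f (v p.1 l * w p.2 o) *
        g (v r p.1 * w t p.2) := by
  have inner (r : ι) (t : κ) : ∑ s, f (rightAct ρ (w t s) (v r l) * w s o) =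
      ∑ p : ι × κ, ρ (v r p.1) (w t p.2) • f (v p.1 l * w p.2 o) := by
    simp only [hv.rightAct_entry, Finset.sum_mul, smul_mul_assoc, map_sum, map_smul,
      Fintype.sum_prod_type]
    exact Finset.sum_comm
  calc
    _ = ∑ p : ι × κ, f (v p.1 l * w p.2 o) *
          g (∑ r, ∑ t, ρ (v r p.1) (w t p.2) • (w m t * v k r)) := by
      simp only [inner, Finset.sum_mul, map_sum, map_smul, Finset.mul_sum, smul_mul_assoc,
        mul_smul_comm]
      rw [Finset.sum_comm, Finset.sum_comm_cycle]
    _ = _ := by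
      simp only [hv.sum_smul_mul_comm hw hρ, map_sum, map_smul, Finset.mul_sum, mul_smul_comm,
        Finset.smul_sum]
      exact Finset.sum_comm_cycle.symm

lemma sum_covMulRight_covMulRight_leftAct (hv : IsMultiplicativeMatrix_s14 R v)
    (hw : IsMultiplicativeMatrix_s14 R w) (hρ : IsDQT ρ) (hρt : IsCopConvInv ρ ρt)
    (k l : ι) (m o : κ) :
    ∑ t, (∑ r, (∑ s, covMulRight ρ ρt (covMulRight ρ ρt (w s o)
        (leftAct ρ (w t s) (v r l)))) * leftAct ρ (v k r)) * leftAct ρ (w m t) =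
      ∑ r, ∑ s, rightMul R A (w s o) * rightAct ρ (w m s) * rightMul R A (v r l) *
        rightAct ρ (v k r) := by
  have inner (t : κ) (b : A) : ∑ s, covMulRight ρ ρt (w s o) (leftAct ρ (w t s) b) =
      ∑ s, rightAct ρ (w t s) b * w s o := by
    simpa using congr($(hw.sum_covMulRight_mul_leftAct hρt t o) b)
  calc _ = ∑ t, ∑ r, (∑ s, covMulRight ρ ρt (rightAct ρ (w t s) (v r l) * w s o)) *
          leftAct ρ (w m t * v k r) := by
        simp only [← map_sum, inner, Finset.sum_mul, hρ.leftAct_mul, mul_assoc]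
    _ = ∑ t, ∑ r, (∑ s, rightMul R A (rightAct ρ (w t s) (v r l) * w s o)) *
          rightAct ρ (w m t * v k r) := by
        simp only [hv.sum_apply_rightAct_mul hw hρ,
          (hv.kronecker hw).sum_covMulRight_mul_leftAct hρt (_, _) (l, o)]
    _ = ∑ r, ∑ s, rightMul R A (w s o) * ((∑ t, rightMul R A (rightAct ρ (w t s) (v r l)) *
          rightAct ρ (w m t)) * rightAct ρ (v k r)) := by
      have rightMul_mul (b c : A) : rightMul R A (b * c) = rightMul R A c * rightMul R A b := by
        ext; simp [mul_assoc]
      rw [Finset.sum_comm]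
      simp only [rightMul_mul, hρ.rightAct_mul, Finset.sum_mul, Finset.mul_sum, mul_assoc]
      exact Finset.sum_congr rfl fun r _ ↦ Finset.sum_comm
    _ = _ := by
      have move := fun s ↦ hρ.rightAct_mul_rightMul (hw.repr m s)
      simp only [repr_index, repr_left, repr_right] at move
      simp only [← move, mul_assoc]

lemma covMulRight_covMulRight_apply (hv : IsMultiplicativeMatrix_s14 R v)
    (hw : IsMultiplicativeMatrix_s14 R w) (hρ : IsDQT ρ) (hρt : IsCopConvInv ρ ρt)
    (k l : ι) (m o : κ) :
    covMulRight ρ ρt (covMulRight ρ ρt (w m o) (v k l)) =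
      covMulRight ρ ρt (w m o) * covMulRight ρ ρt (v k l) := by
  -- Composed with the invertible actions of `v` and `w`, both sides become the same `ρt`-free sum.
  let P := covMulRight ρ ρt
  let f (l : ι) (t : κ) (r : ι) : Module.End R A :=
    ∑ s, P (P (w s o) (leftAct ρ (w t s) (v r l)))
  let g (l : ι) (t : κ) (r : ι) : Module.End R A :=
    ∑ s, P (w s o) * P (leftAct ρ (w t s) (v r l))
  have twisted (l : ι) : f l = g l := funext fun t ↦ hv.eq_of_sum_comp_leftAct hρt fun i ↦
    congrFun (hw.eq_of_sum_comp_leftAct hρt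
      (f := fun t ↦ ∑ r, f l t r * leftAct ρ (v i r))
      (g := fun t ↦ ∑ r, g l t r * leftAct ρ (v i r))
      fun j ↦ (hv.sum_covMulRight_covMulRight_leftAct hw hρ hρt i l j o).trans
        (hv.sum_covMulRight_mul_covMulRight_leftAct hw hρ hρt i l j o).symm) t
  have cancel (f : κ → A →ₗ[R] Module.End R A) :
      f m (v k l) = ∑ t, ∑ s, f s (leftAct ρ (w t s) (leftAct ρt (w m t) (v k l))) := by
    simpa using congr($(hw.sum_comp_leftAct_comp_leftAct hρt f m) (v k l)).symm
  refine (cancel fun s ↦ P ∘ₗ P (w s o)).trans <| .trans ?_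
    (cancel fun s ↦ LinearMap.mulLeft R (P (w s o)) ∘ₗ P).symm
  refine Finset.sum_congr rfl fun t _ ↦ ?_
  simp only [hv.leftAct_entry ρt, map_sum, map_smul, LinearMap.comp_apply]
  rw [Finset.sum_comm, Finset.sum_comm (γ := κ)]
  simp only [← Finset.smul_sum, LinearMap.mulLeft_apply]
  exact Finset.sum_congr rfl fun r _ ↦ congrArg _ congr($(twisted r) t k)

end IsMultiplicativeMatrix_s14

end MultiplicativeMatrix

section MatrixEntries

variable {R : Type u} [CommRing R] {A : Type u} [Ring A] [Bialgebra R A]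
  {ρ ρt : A →ₗ[R] A →ₗ[R] R} {cmul : A → A → A} {a b c : A}
  {ι : Type*} [Fintype ι] [DecidableEq ι] {v : ι → ι → A}

lemma IsMultiplicativeMatrix_s14.exists_fin (hv : IsMultiplicativeMatrix_s14 R v) (i j : ι) :
    ∃ (n : ℕ) (w : Fin n → Fin n → A) (k l : Fin n),
      IsMultiplicativeMatrix_s14 R w ∧ w k l = v i j := by
  let e := Fintype.equivFin ι
  refine ⟨_, fun k l ↦ v (e.symm k) (e.symm l), e i, e j, ⟨fun k l ↦ ?_, ?_⟩, by simp⟩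
  · rw [hv.comul, ← e.symm.sum_comp]
  · simp [hv.counit]

variable (R A) in
/-- The submonoid of all entries of multiplicative matrices. Indexing by `Fin n` rather than by an
arbitrary finite type avoids a universe parameter. -/
def matrixEntries : Submonoid A where
  carrier := {a | ∃ (n : ℕ) (v : Fin n → Fin n → A) (i j : Fin n),
    IsMultiplicativeMatrix_s14 R v ∧ v i j = a}
  one_mem' := IsMultiplicativeMatrix_s14.one.exists_fin () ()
  mul_mem' := by
    rintro _ _ ⟨m, v, i, j, hv, rfl⟩ ⟨n, w, k, l, hw, rfl⟩
    exact (hv.kronecker hw).exists_fin (i, k) (j, l)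

variable (R A) in
/-- The span of the entries of multiplicative matrices, that is, of the coefficients of
the comodules that are free of finite rank. -/
def matrixEntrySpan : Submodule R A := Submodule.span R (matrixEntries R A)

lemma IsMultiplicativeMatrix_s14.mem_matrixEntrySpan (hv : IsMultiplicativeMatrix_s14 R v) (i j : ι) :
    v i j ∈ matrixEntrySpan R A :=
  Submodule.subset_span (hv.exists_fin i j)

lemma mul_mem_matrixEntrySpan (ha : a ∈ matrixEntrySpan R A) (hb : b ∈ matrixEntrySpan R A) :
    a * b ∈ matrixEntrySpan R A := by
  simpa [matrixEntrySpan, Submodule.span_mul_span] using Submodule.mul_mem_mul ha hb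

lemma leftAct_mem_matrixEntrySpan (σ : A →ₗ[R] A →ₗ[R] R) (b : A)
    (ha : a ∈ matrixEntrySpan R A) : leftAct σ b a ∈ matrixEntrySpan R A := by
  suffices matrixEntrySpan R A ≤ (matrixEntrySpan R A).comap (leftAct σ b) from this ha
  refine Submodule.span_le.2 ?_
  rintro _ ⟨n, v, i, j, hv, rfl⟩
  simpa [hv.leftAct_entry] using
    sum_mem fun k _ ↦ Submodule.smul_mem _ _ (hv.mem_matrixEntrySpan i k)

lemma rightAct_mem_matrixEntrySpan (σ : A →ₗ[R] A →ₗ[R] R) (b : A)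
    (ha : a ∈ matrixEntrySpan R A) : rightAct σ b a ∈ matrixEntrySpan R A := by
  suffices matrixEntrySpan R A ≤ (matrixEntrySpan R A).comap (rightAct σ b) from this ha
  refine Submodule.span_le.2 ?_
  rintro _ ⟨n, v, i, j, hv, rfl⟩
  simpa [hv.rightAct_entry] using
    sum_mem fun k _ ↦ Submodule.smul_mem _ _ (hv.mem_matrixEntrySpan k j)

lemma covMulRight_mem_matrixEntrySpan (ρ ρt : A →ₗ[R] A →ₗ[R] R)
    (hb : b ∈ matrixEntrySpan R A) (ha : a ∈ matrixEntrySpan R A) :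
    covMulRight ρ ρt b a ∈ matrixEntrySpan R A := by
  suffices matrixEntrySpan R A ≤
    (matrixEntrySpan R A).comap ((covMulRight ρ ρt).flip a) from this hb
  refine Submodule.span_le.2 ?_
  rintro _ ⟨n, v, i, j, hv, rfl⟩
  simpa [hv.covMulRight_entry] using sum_mem fun r _ ↦ sum_mem fun s _ ↦
    mul_mem_matrixEntrySpan
      (rightAct_mem_matrixEntrySpan ρ _ (leftAct_mem_matrixEntrySpan ρt _ ha))
      (hv.mem_matrixEntrySpan s j)

lemma IsDQT.covMulRight_covMulRight_apply (hρ : IsDQT ρ) (hρt : IsCopConvInv ρ ρt)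
    (hb : b ∈ matrixEntrySpan R A) (hc : c ∈ matrixEntrySpan R A) :
    covMulRight ρ ρt (covMulRight ρ ρt c b) = covMulRight ρ ρt c * covMulRight ρ ρt b := by
  induction hb, hc using Submodule.span_induction₂ with
  | mem_mem b c hb hc =>
    obtain ⟨m, v, i, j, hv, rfl⟩ := hb
    obtain ⟨n, w, k, l, hw, rfl⟩ := hc
    exact hv.covMulRight_covMulRight_apply hw hρ hρt i j k l
  | zero_left | zero_right => simp
  | add_left _ _ _ _ _ _ h h' => simp [h, h', mul_add]
  | add_right _ _ _ _ _ _ h h' => simp [h, h', add_mul]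
  | smul_left _ _ _ _ _ h | smul_right _ _ _ _ _ h => simp [h]

lemma CovChar.one_mul_entry (h : CovChar ρ ρt cmul) (hρ : IsDQT ρ) (hρt : IsCopConvInv ρ ρt)
    (hv : IsMultiplicativeMatrix_s14 R v) (i j : ι) : cmul 1 (v i j) = v i j := by
  have key := congr($(hv.sum_covMulRight_mul_leftAct hρt i j) 1)
  simp only [LinearMap.sum_apply, Module.End.mul_apply, hρ.leftAct_apply_one,
    hρ.rightAct_apply_one, map_smul] at key
  simpa [hv.counit, h.eq_covMulRight] using key

lemma CovChar.mul_assoc (h : CovChar ρ ρt cmul) (hρ : IsDQT ρ) (hρt : IsCopConvInv ρ ρt)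
    (a : A) (hb : b ∈ matrixEntrySpan R A) (hc : c ∈ matrixEntrySpan R A) :
    cmul (cmul a b) c = cmul a (cmul b c) := by
  simp [h.eq_covMulRight, hρ.covMulRight_covMulRight_apply hρt hb hc]

lemma CovChar.cchain_mem_matrixEntrySpan (h : CovChar ρ ρt cmul) {l : List A}
    (ha : a ∈ matrixEntrySpan R A) (hl : ∀ b ∈ l, b ∈ matrixEntrySpan R A) :
    cchain cmul a l ∈ matrixEntrySpan R A := by
  induction l generalizing a with
  | nil => exact ha
  | cons b l ih =>
    rw [cchain, h.eq_covMulRight]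
    rw [List.forall_mem_cons] at hl
    exact covMulRight_mem_matrixEntrySpan ρ ρt (ih hl.1 hl.2) ha

lemma CovChar.cchain_append_singleton (h : CovChar ρ ρt cmul) (hρ : IsDQT ρ)
    (hρt : IsCopConvInv ρ ρt) (a : A) {l : List A} (hl : ∀ b ∈ l, b ∈ matrixEntrySpan R A)
    (hc : c ∈ matrixEntrySpan R A) :
    cchain cmul a (l ++ [c]) = cmul (cchain cmul a l) c := by
  induction l generalizing a with
  | nil => rfl
  | cons b l ih =>
    rw [List.forall_mem_cons] at hl
    rw [List.cons_append, cchain, ih b hl.2, cchain,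
      h.mul_assoc hρ hρt a (h.cchain_mem_matrixEntrySpan hl.1 hl.2) hc]

end MatrixEntries

section Diagonal

variable {R : Type u} [CommRing R] {A : Type u} [Ring A] [Bialgebra R A]
  {ρ ρt : A →ₗ[R] A →ₗ[R] R} {cmul : A → A → A}
  {ι : Type*} [Fintype ι] [LinearOrder ι] {x : ι → ι → A} {c q : Rˣ}

/-- The standard `R`-matrix `c (δ^i_j δ^k_l q^{δ^j_l} + (q − q⁻¹) δ_{j>l} δ^i_l δ^k_j)` with an
arbitrary invertible normalization `c`; `RmatVal` is the case `c = q^{-1/n}`. -/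
def stdRMatrix (c q : Rˣ) (i j k l : ι) : R :=
  c * ((if i = j ∧ k = l then (if j = l then (q : R) else 1) else 0) +
    if i = l ∧ k = j ∧ l < j then (q : R) - ((q⁻¹ : Rˣ) : R) else 0)

lemma stdRMatrix_eq_RmatVal (n : ℕ) (qr : Rˣ) (i j k l : Fin n) :
    stdRMatrix qr⁻¹ (qr ^ n) i j k l = RmatVal n qr i j k l := by
  simp only [stdRMatrix, RmatVal]
  congr 2
  · split_ifs <;> simp_all
  · split_ifs <;> simp_all

lemma leftAct_entry_stdRMatrix (hx : IsMultiplicativeMatrix_s14 R x)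
    (hρx : ∀ i j k l, ρ (x i j) (x k l) = stdRMatrix c q i j k l) (i j k l : ι) :
    leftAct ρ (x k l) (x i j) =
      (c : R) • ((if k = l then (if j = l then (q : R) else 1) • x i j else 0) +
        if k = j ∧ l < j then ((q : R) - ((q⁻¹ : Rˣ) : R)) • x i l else 0) := by
  simp [hx.leftAct_entry, hρx, stdRMatrix, add_smul, mul_smul, Finset.sum_add_distrib, ite_and]

lemma rightAct_entry_stdRMatrix (hx : IsMultiplicativeMatrix_s14 R x)
    (hρx : ∀ i j k l, ρ (x i j) (x k l) = stdRMatrix c q i j k l) (i j k : ι) :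
    rightAct ρ (x i k) (x i j) = if i = k then ((c * q : Rˣ) : R) • x i j else 0 := by
  rw [hx.rightAct_entry, Finset.sum_eq_single i]
  · by_cases h : i = k
    · simp [hρx, stdRMatrix, h]
    · simp [hρx, stdRMatrix, h]
  · intro l _ hl
    simp [hρx, stdRMatrix, Ne.symm hl]
  · simp

lemma IsDQT.mul_entry_eq_smul (hρ : IsDQT ρ) (hx : IsMultiplicativeMatrix_s14 R x)
    (hρx : ∀ i j k l, ρ (x i j) (x k l) = stdRMatrix c q i j k l) (i : ι) {j k : ι}
    (hjk : j < k) :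
    x i k * x i j = (q : R) • (x i j * x i k) := by
  have exchange : (c : R) • (x i k * x i j) = (c * q : R) • (x i j * x i k) := by
    simpa [leftAct_entry_stdRMatrix hx hρx, rightAct_entry_stdRMatrix hx hρx, hjk.ne, hjk.not_gt]
      using hρ.sum_mul_leftAct (hx.repr i k) (x i j)
  rwa [mul_smul, c.isUnit.smul_left_cancel] at exchange

section DiagonalPower

variable (hρ : IsDQT ρ) (hx : IsMultiplicativeMatrix_s14 R x)
    (hρx : ∀ i j k l, ρ (x i j) (x k l) = stdRMatrix c q i j k l)
include hρ hx hρx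

lemma rightAct_diag_pow (k m : ι) (N : ℕ) :
    rightAct ρ (x k m) (x k k ^ N) =
      if k = m then ((c * q : Rˣ) : R) ^ N • x k k ^ N else 0 := by
  induction N generalizing m with
  | zero => simp [hρ.rightAct_apply_one, hx.counit]
  | succ N ih =>
    simp [pow_succ', hρ.rightAct_apply_mul (hx.repr k m), rightAct_entry_stdRMatrix hx hρx, ih,
      smul_smul]

lemma leftAct_diag_pow_succ (k m : ι) (N : ℕ) :
    leftAct ρ (x k m) (x k k ^ (N + 1)) =
      (c : R) • ((if k = m then (q : R) else 1) • (leftAct ρ (x k m) (x k k ^ N) * x k k) +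
        if m < k then ((q : R) - ((q⁻¹ : Rˣ) : R)) • (leftAct ρ (x k k) (x k k ^ N) * x k m)
        else 0) := by
  simp [pow_succ, hρ.leftAct_apply_mul (hx.repr k m), leftAct_entry_stdRMatrix hx hρx, mul_add,
    Finset.sum_add_distrib, ite_and]

lemma leftAct_diag_pow_self (k : ι) (N : ℕ) :
    leftAct ρ (x k k) (x k k ^ N) = ((c * q : Rˣ) : R) ^ N • x k k ^ N := by
  induction N with
  | zero => simp [hρ.leftAct_apply_one, hx.counit]
  | succ N ih =>
    rw [leftAct_diag_pow_succ hρ hx hρx, if_pos rfl, if_neg (lt_irrefl k), add_zero, ih,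
      smul_mul_assoc, ← pow_succ, smul_smul, smul_smul, pow_succ' ((c * q : Rˣ) : R) N,
      Units.val_mul]

lemma leftAct_diag_pow_of_lt {k m : ι} (hkm : k < m) (N : ℕ) :
    leftAct ρ (x k m) (x k k ^ N) = 0 := by
  induction N with
  | zero => simp [hρ.leftAct_apply_one, hx.counit, hkm.ne]
  | succ N ih => simp [leftAct_diag_pow_succ hρ hx hρx, ih, hkm.not_gt]

lemma leftAct_diag_pow_succ_of_gt {k m : ι} (hmk : m < k) (N : ℕ) :
    leftAct ρ (x k m) (x k k ^ (N + 1)) =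
      (((c * q : Rˣ) : R) ^ (N + 1) * (1 - ((q⁻¹ : Rˣ) : R) ^ (2 * (N + 1)))) •
        (x k k ^ N * x k m) := by
  have hq : (q : R) * ((q⁻¹ : Rˣ) : R) = 1 := q.mul_inv
  induction N with
  | zero =>
    rw [leftAct_diag_pow_succ hρ hx hρx, if_neg hmk.ne', if_pos hmk]
    simp only [pow_zero, hρ.leftAct_apply_one, hx.counit, hmk.ne', if_true, if_false, zero_smul,
      zero_mul, smul_zero, zero_add, one_smul, one_mul, smul_smul]
    congr 1
    push_cast
    linear_combination (c * ((q⁻¹ : Rˣ) : R)) * hq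
  | succ N ih =>
    have swap : x k k ^ N * x k m * x k k = ((q⁻¹ : Rˣ) : R) • (x k k ^ (N + 1) * x k m) := by
      rw [pow_succ, mul_assoc, mul_assoc, hρ.mul_entry_eq_smul hx hρx k hmk, mul_smul_comm,
        smul_smul, Units.inv_mul, one_smul]
    rw [leftAct_diag_pow_succ hρ hx hρx, if_neg hmk.ne', if_pos hmk, ih,
      leftAct_diag_pow_self hρ hx hρx, smul_mul_assoc, swap]
    simp only [smul_mul_assoc, smul_smul, ← add_smul]
    congr 1
    push_cast
    linear_combination ((c * q) ^ (N + 1) * c * ((q⁻¹ : Rˣ) : R) ^ (2 * N + 3)) * hq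

lemma leftAct_diag_pow_succ_eq (k m : ι) (N : ℕ) :
    leftAct ρ (x k m) (x k k ^ (N + 1)) = ((c * q : Rˣ) : R) ^ (N + 1) •
      ((if m = k then (1 : R) else 0) • x k k ^ (N + 1) +
        (if m < k then 1 - ((q⁻¹ : Rˣ) : R) ^ (2 * (N + 1)) else 0) •
          (x k k ^ N * x k m)) := by
  rcases lt_trichotomy m k with hmk | rfl | hkm
  · simp [leftAct_diag_pow_succ_of_gt hρ hx hρx hmk, hmk, hmk.ne, smul_smul]
  · simp [leftAct_diag_pow_self hρ hx hρx]
  · simp [leftAct_diag_pow_of_lt hρ hx hρx hkm, hkm.ne', hkm.not_gt]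

lemma diag_pow_succ_mul_entry (hρt : IsCopConvInv ρ ρt) (h : CovChar ρ ρt cmul) (k l : ι)
    (N : ℕ) :
    x k k ^ (N + 1) * x k l = cmul (x k k ^ (N + 1)) (x k l) +
      (1 - ((q⁻¹ : Rˣ) : R) ^ (2 * (N + 1))) •
        ∑ m with m < k, cmul (x k k ^ N * x k m) (x m l) := by
  have key := congr($(hx.sum_covMulRight_mul_leftAct hρt k l) (x k k ^ (N + 1)))
  simp only [LinearMap.sum_apply, Module.End.mul_apply, leftAct_diag_pow_succ_eq hρ hx hρx,
    rightAct_diag_pow hρ hx hρx, map_smul, map_add, ← Finset.smul_sum] at key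
  have cancel : IsUnit (((c * q : Rˣ) : R) ^ (N + 1)) := (c * q).isUnit.pow _
  refine cancel.smul_left_cancel.1 ?_
  rw [Finset.smul_sum, Finset.sum_filter]
  simp only [h.eq_covMulRight]
  simpa [Finset.sum_add_distrib, ite_smul] using key.symm

end DiagonalPower

/-- The sum over the paths `k = β₀, β₁, …, β_i, l` whose inner vertices `β₁, …, β_i` are smaller
than `k` of the covariantized products `y ⬝ x^{β₀}_{β₁} ⬝ ⋯ ⬝ x^{β_{i-1}}_{β_i} ⬝ x^{β_i}_l`. -/
def pathSum (cmul : A → A → A) (x : ι → ι → A) (k : ι) (i : ℕ) (y : A) (l : ι) : A :=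
  ∑ β : Fin (i + 1) → ι with β 0 = k ∧ ∀ j, j ≠ 0 → β j < k,
    cchain cmul y ((List.finRange i).map (fun m ↦ x (β m.castSucc) (β m.succ)) ++
      [x (β (Fin.last i)) l])

lemma pathSum_zero (cmul : A → A → A) (x : ι → ι → A) (k : ι) (y : A) (l : ι) :
    pathSum cmul x k 0 y l = cmul y (x k l) := by
  have paths : ({β : Fin (0 + 1) → ι | β 0 = k ∧ ∀ j, j ≠ 0 → β j < k} : Finset _) =
      {fun _ ↦ k} := by
    ext β
    simp [funext_iff, Fin.forall_fin_one]
  rw [pathSum, paths, Finset.sum_singleton]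
  rfl

lemma CovChar.pathSum_succ (h : CovChar ρ ρt cmul) (hρ : IsDQT ρ) (hρt : IsCopConvInv ρ ρt)
    (hx : IsMultiplicativeMatrix_s14 R x) (k : ι) (i : ℕ) (y : A) (l : ι) :
    pathSum cmul x k (i + 1) y l = ∑ m with m < k, cmul (pathSum cmul x k i y m) (x m l) := by
  simp only [pathSum, h.eq_covMulRight, map_sum]
  rw [← Finset.sum_product']
  refine Finset.sum_nbij' (fun β ↦ (β (Fin.last _), Fin.init β))
    (fun p ↦ Fin.snoc (α := fun _ ↦ ι) p.2 p.1) ?_ ?_ (by simp) (by simp) ?_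
  · intro β hβ
    simp only [Finset.mem_filter_univ, Finset.mem_product] at hβ ⊢
    exact ⟨hβ.2 _ Fin.last_pos.ne', hβ.1, fun j hj ↦ hβ.2 _ (by simpa using hj)⟩
  · rintro ⟨m, β⟩ hβ
    simp only [Finset.mem_filter_univ, Finset.mem_product] at hβ ⊢
    obtain ⟨hm, h0, hβ⟩ := hβ
    refine ⟨by rw [← Fin.castSucc_zero, Fin.snoc_castSucc, h0], fun j hj ↦ ?_⟩
    induction j using Fin.lastCases with
    | last => simpa using hm
    | cast j => simpa using hβ j (by simpa using hj)
  · intro β _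
    rw [h.cchain_append_singleton hρ hρt _ ?_ (hx.mem_matrixEntrySpan _ _), h.eq_covMulRight,
      List.finRange_succ_last]
    · simp [Fin.init, Function.comp_def]
    · simp only [List.mem_map, forall_exists_index, and_imp]
      rintro _ m - rfl
      exact hx.mem_matrixEntrySpan _ _

lemma prod_Icc_succ_one_sub_qzpow (q : Rˣ) (N i : ℕ) :
    ∏ j ∈ Finset.Icc 1 (i + 1), (1 - qzpow q (-(2 * (((N + 1 : ℕ) : ℤ) + 1 - (j : ℤ))))) =
      (1 - ((q⁻¹ : Rˣ) : R) ^ (2 * (N + 1))) *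
        ∏ j ∈ Finset.Icc 1 i, (1 - qzpow q (-(2 * ((N : ℤ) + 1 - (j : ℤ))))) := by
  have first : ((q⁻¹ : Rˣ) : R) ^ (2 * (N + 1)) =
      qzpow q (-(2 * (((N + 1 : ℕ) : ℤ) + 1 - ((1 : ℕ) : ℤ)))) := by
    rw [qzpow, ← Units.val_pow_eq_pow_val, inv_pow, ← zpow_natCast, ← zpow_neg]
    push_cast
    ring_nf
  rw [first]
  simp only [← Finset.Ico_add_one_right_eq_Icc, Finset.prod_Ico_eq_prod_range, Nat.add_sub_cancel]
  rw [Finset.prod_range_succ', mul_comm]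
  congr 1
  refine Finset.prod_congr rfl fun j _ ↦ ?_
  congr 3
  push_cast
  ring

theorem diag_power_mul_expansion_general (hρ : IsDQT ρ) (hx : IsMultiplicativeMatrix_s14 R x)
    (hρx : ∀ i j k l, ρ (x i j) (x k l) = stdRMatrix c q i j k l)
    (hρt : IsCopConvInv ρ ρt) (hcmul : CovChar ρ ρt cmul) (N : ℕ) (k l : ι) :
    x k k ^ N * x k l = ∑ i ∈ Finset.range (N + 1),
      (∏ j ∈ Finset.Icc 1 i, (1 - qzpow q (-(2 * ((N : ℤ) + 1 - (j : ℤ)))))) •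
        pathSum cmul x k i (x k k ^ (N - i)) l := by
  induction N generalizing l with
  | zero => simp [pathSum_zero, hcmul.one_mul_entry hρ hρt hx]
  | succ N ih =>
    rw [diag_pow_succ_mul_entry hρ hx hρx hρt hcmul, Finset.sum_range_succ', add_comm]
    congr 1
    · calc
        _ = (1 - ((q⁻¹ : Rˣ) : R) ^ (2 * (N + 1))) • ∑ i ∈ Finset.range (N + 1),
              (∏ j ∈ Finset.Icc 1 i, (1 - qzpow q (-(2 * ((N : ℤ) + 1 - (j : ℤ)))))) •
                ∑ m with m < k, cmul (pathSum cmul x k i (x k k ^ (N - i)) m) (x m l) := by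
          simp only [ih, hcmul.eq_covMulRight, map_sum, map_smul, Finset.smul_sum]
          rw [Finset.sum_comm]
        _ = _ := by
          simp only [Finset.smul_sum (s := Finset.range (N + 1)), smul_smul,
            prod_Icc_succ_one_sub_qzpow, hcmul.pathSum_succ hρ hρt hx, Nat.add_sub_add_right]
    · simp [pathSum_zero]

end Diagonal

/-- In the common underlying module of `O_q(M_n)` and `B_q(M_n)`, for `N ≥ 1`,
`(x^k_k)^N x^k_l = ∑_{i=0}^{N} ∑_β (∏_{j=1}^{i} (1 − q^{−2(N+1−j)}))
  ((x^k_k)^{N−i}) ⬝ x^{β₁}_{β₂} ⬝ ⋯ ⬝ x^{β_i}_{β_{i+1}} ⬝ x^{β_{i+1}}_l`,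
the inner sum being over tuples `β = (β₁, …, β_{i+1})` with `β₁ = k` and `β_j < k`
for `1 < j ≤ i + 1` (recorded `0`-indexed below). -/
theorem diag_power_mul_expansion
    {R : Type u} [CommRing R] (n : ℕ) (hn : 2 ≤ n) (qr : Rˣ)
    {A : Type u} [Ring A] [Bialgebra R A] (x : Fin n → Fin n → A)
    (hx : OqMnRels n (qr ^ n) x)
    (hxuniv : ∀ (B : Type u) [Ring B] [Algebra R B] (y : Fin n → Fin n → B),
      OqMnRels n (qr ^ n) y → ∃! f : A →ₐ[R] B, ∀ i j, f (x i j) = y i j)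
    (hΔ : ∀ i j, Coalgebra.comul (R := R) (x i j) = ∑ k, x i k ⊗ₜ[R] x k j)
    (hε : ∀ i j, Coalgebra.counit (R := R) (x i j) = if i = j then (1 : R) else 0)
    (ρ : A →ₗ[R] A →ₗ[R] R) (hρ : IsDQT ρ)
    (hρx : ∀ i j k l, ρ (x i j) (x k l) = RmatVal n qr i j k l)
    (ρt : A →ₗ[R] A →ₗ[R] R) (hρt : IsCopConvInv ρ ρt)
    (cmul : A → A → A) (hcmul : CovChar ρ ρt cmul)
    (N : ℕ) (hN : 1 ≤ N) (k l : Fin n) :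
    x k k ^ N * x k l =
      ∑ i ∈ Finset.range (N + 1),
        ∑ β ∈ Finset.univ.filter (fun β : Fin (i + 1) → Fin n =>
            β 0 = k ∧ ∀ j : Fin (i + 1), j ≠ 0 → β j < k),
          (∏ j ∈ Finset.Icc 1 i,
              (1 - qzpow (qr ^ n) (-(2 * ((N : ℤ) + 1 - (j : ℤ)))))) •
            cListProd cmul 1
              ((x k k ^ (N - i)) ::
                (((List.finRange i).map (fun m => x (β m.castSucc) (β m.succ))) ++
                  [x (β (Fin.last i)) l])) := by
  simp only [← Finset.smul_sum]
  exact diag_power_mul_expansion_general hρ ⟨hΔ, hε⟩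
    (fun i j k l ↦ (hρx i j k l).trans (stdRMatrix_eq_RmatVal n qr i j k l).symm) hρt hcmul N k l

end
end
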